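/- Let Ω ⊂ ℝ^N be a bounded open set with Lipschitz boundary and let p ∈ C(Ω̄) with p ≥ 1. Then: (i) {u ∈ L¹(Ω;ℝ^d) : ∇u ∈ L^{p(·)}(Ω;ℝ^{d×N})} = W^{1,p(·)}(Ω;ℝ^d); (ii) the embedding W^{1,p(·)}(Ω;ℝ^d) ↪ L^{p(·)}(Ω;ℝ^d) is compact; (iii) the norm |||u||| := ‖u‖_{L¹(Ω;ℝ^d)} + ‖∇u‖_{L^{p(·)}(Ω;ℝ^{d×N})} is equivalent to the norm of W^{1,p(·)}(Ω;ℝ^d). -/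

import Mathlib

/-!
A Lipschitz boundary gives, near every point `x₀` of `closure Ω`, a fixed ball of directions whose
short multiples, attached to any nearby point of `Ω`, stay in `Ω` (`exists_cone`). For a mollifier `ρ`
supported in that ball of directions, the averages `∫ mollKer ρ t x y • u y` tend to `u x` almost
everywhere as `t → 0`, and their `t`-derivative involves only the gradient of `u`, because the
`t`-derivative of the kernel is a divergence in `y` of a field compactly supported in `Ω`
(`hasDerivAt_coneAvg`). Hence the error of the average at scale `ε` is at most the integral over
`0 < t ≤ ε` of averages of the gradient on balls of radius comparable to `t` (`ae_enorm_sub_le`).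

Since `p` is continuous, on a small ball it takes values between some `a ≥ 1` and a slightly larger
number. Jensen's inequality with the exponent `a`, and the bound on the modular for the excess
power, give the estimate of the `p(x)`-th power of the error with a loss of only `t^(-1/2)`, which is
integrable in `t` (`coneAvg_rpow_le`, `exists_majorant`). So, near each point of the closure and
uniformly over bounded modulars of the gradient, functions are approximated in the modular by
integral operators with bounded continuous kernels (`HasKernelApprox`, `exists_hasKernelApprox`). No
log-Hölder condition, and no boundedness of the maximal operator, is needed.

Compactness of `closure Ω` makes this global. The kernel averages are bounded by the `L¹` norm, so the
modular of `u` is bounded in terms of the `L¹` norm and the modular of the gradient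
(`exists_modular_bound`); this is (i), and (iii) by scaling. For (ii), a bounded sequence has a
subsequence converging weakly-star as measures (`exists_subseq_kernel`), its kernel averages
converge pointwise, so the subsequence is Cauchy in the modular (`tendsto_modular_cauchy`), and the
space is complete (`exists_modular_limit`).
-/

open MeasureTheory Filter Topology Set
open scoped ENNReal NNReal

noncomputable section

/-- `ℝ^n` as a Euclidean space. -/
abbrev Euc (n : ℕ) := EuclideanSpace ℝ (Fin n)

/-- `d × n` real matrices (gradients of maps `ℝ^n → ℝ^d`). -/
abbrev Mat (d n : ℕ) := Fin d → Fin n → ℝ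

/-- Euclidean (Frobenius) norm of a matrix. -/
def mnorm {d n : ℕ} (ξ : Mat d n) : ℝ := Real.sqrt (∑ i, ∑ j, (ξ i j)^2)

/-- `G` is a weak (distributional) gradient of `v` on the open set `Ω`. -/
def IsWeakGrad {n d : ℕ} (Ω : Set (Euc n)) (v : Euc n → Euc d) (G : Euc n → Mat d n) : Prop :=
  ∀ φ : Euc n → ℝ, ContDiff ℝ (⊤ : ℕ∞) φ → HasCompactSupport φ → tsupport φ ⊆ Ω →
    ∀ i : Fin d, ∀ j : Fin n,
      ∫ x in Ω, φ x * G x i j = - ∫ x in Ω, (fderiv ℝ φ x (EuclideanSpace.single j 1)) * v x i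

/-- Membership in `W^{1,1}(Ω;ℝ^d)` with weak gradient `G`. -/
def MemW11 {n d : ℕ} (Ω : Set (Euc n)) (v : Euc n → Euc d) (G : Euc n → Mat d n) : Prop :=
  IntegrableOn v Ω ∧ (∀ i j, IntegrableOn (fun x => G x i j) Ω) ∧ IsWeakGrad Ω v G

/-- The open unit cube `(-1/2,1/2)^n`. -/
def unitCube (n : ℕ) : Set (Euc n) := {x | ∀ j, |x j| < 1/2}

/-- Matrix of partial derivatives of a map `ℝ^n → ℝ^d`. -/
def gradMat {n d : ℕ} (φ : Euc n → Euc d) (x : Euc n) : Mat d n :=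
  fun i j => fderiv ℝ φ x (EuclideanSpace.single j 1) i

/-- Quasiconvexity of `g : ℝ^{d×n} → ℝ`. -/
def QuasiconvexFn {d n : ℕ} (g : Mat d n → ℝ) : Prop :=
  ∀ ξ : Mat d n, ∀ φ : Euc n → Euc d, ContDiff ℝ (⊤ : ℕ∞) φ → tsupport φ ⊆ unitCube n →
    g ξ ≤ ∫ x in unitCube n, g (fun i j => ξ i j + gradMat φ x i j)

/-- The quasiconvex envelope: the greatest quasiconvex function below `g`. -/
def qcEnvelope {d n : ℕ} (g : Mat d n → ℝ) (ξ : Mat d n) : ℝ :=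
  sSup {t : ℝ | ∃ h : Mat d n → ℝ, QuasiconvexFn h ∧ (∀ η, h η ≤ g η) ∧ t = h ξ}

/-- The modular `∫_Ω f(x)^{p(x)} dx`, valued in `ℝ≥0∞`. -/
def emod {n : ℕ} (Ω : Set (Euc n)) (p : Euc n → ℝ) (f : Euc n → ℝ) : ℝ≥0∞ :=
  ∫⁻ x in Ω, ENNReal.ofReal (f x ^ p x)

/-- Convergence `p_k → p₀` in `L^∞(Ω)`. -/
def TendstoLinf {n : ℕ} (Ω : Set (Euc n)) (p : ℕ → Euc n → ℝ) (p₀ : Euc n → ℝ) : Prop :=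
  Tendsto (fun k => eLpNorm (fun x => p k x - p₀ x) ⊤ (volume.restrict Ω)) atTop (nhds 0)

/-- Convergence `p_k → p₀` in `L¹(Ω)`. -/
def TendstoL1 {n : ℕ} (Ω : Set (Euc n)) (p : ℕ → Euc n → ℝ) (p₀ : Euc n → ℝ) : Prop :=
  Tendsto (fun k => ∫⁻ x in Ω, ENNReal.ofReal |p k x - p₀ x|) atTop (nhds 0)

/-- Strong `L¹(Ω;ℝ^d)` convergence of vector valued maps. -/
def TendstoL1V {n d : ℕ} (Ω : Set (Euc n)) (v : ℕ → Euc n → Euc d) (v₀ : Euc n → Euc d) : Prop :=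
  Tendsto (fun k => ∫⁻ x in Ω, ENNReal.ofReal ‖v k x - v₀ x‖) atTop (nhds 0)

/-- Weak `L¹(Ω;ℝ^d)` convergence (testing against bounded measurable functions). -/
def WeakL1Tendsto {n d : ℕ} (Ω : Set (Euc n)) (v : ℕ → Euc n → Euc d) (v₀ : Euc n → Euc d) : Prop :=
  ∀ g : Euc n → ℝ, Measurable g → (∃ M, ∀ x, |g x| ≤ M) →
    ∀ i : Fin d, Tendsto (fun k => ∫ x in Ω, g x * v k x i) atTop (nhds (∫ x in Ω, g x * v₀ x i))

/-- Weak `L^r(A)` convergence of scalar functions (testing against `L^{r'}` functions). -/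
def WeakLrTendsto {n : ℕ} (A : Set (Euc n)) (r : ℝ) (F : ℕ → Euc n → ℝ) (F₀ : Euc n → ℝ) : Prop :=
  ∀ g : Euc n → ℝ, Measurable g → (∫⁻ x in A, ENNReal.ofReal (|g x| ^ (r / (r - 1)))) < ⊤ →
    Tendsto (fun k => ∫ x in A, g x * F k x) atTop (nhds (∫ x in A, g x * F₀ x))

/-- The class `𝒫_b(Ω)`: measurable exponents with `1 < p⁻ ≤ p⁺ < ∞`. -/
def IsPb {n : ℕ} (Ω : Set (Euc n)) (p : Euc n → ℝ) : Prop :=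
  Measurable p ∧ ∃ pm pM : ℝ, 1 < pm ∧ ∀ᵐ x ∂(volume.restrict Ω), pm ≤ p x ∧ p x ≤ pM

/-- log-Hölder continuity on `A`. -/
def LogHolder {n : ℕ} (A : Set (Euc n)) (p : Euc n → ℝ) : Prop :=
  ∃ γ > 0, ∀ x ∈ A, ∀ y ∈ A, 0 < dist x y → dist x y < 1/2 →
    |p x - p y| ≤ γ / |Real.log (dist x y)|

/-- The class `𝒫_b^{log}(A)`. -/
def IsPbLog {n : ℕ} (A : Set (Euc n)) (p : Euc n → ℝ) : Prop := IsPb A p ∧ LogHolder A p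

/-- `p₀ ∈ L^∞(Ω)`. -/
def MemLinf {n : ℕ} (Ω : Set (Euc n)) (p : Euc n → ℝ) : Prop :=
  Measurable p ∧ ∃ M : ℝ, ∀ᵐ x ∂(volume.restrict Ω), |p x| ≤ M

/-- Update the `i`-th coordinate of a point of `ℝ^n`. -/
def updCoord {n : ℕ} (y : Euc n) (i : Fin n) (t : ℝ) : Euc n :=
  (WithLp.equiv 2 _).symm (Function.update ((WithLp.equiv 2 _) y) i t)

/-- `s` has Lipschitz boundary: near every boundary point, in suitable orthonormal
coordinates, `s` is the open region above the graph of a Lipschitz function. -/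
def HasLipschitzBoundary {n : ℕ} (s : Set (Euc n)) : Prop :=
  ∀ x ∈ frontier s, ∃ U : Set (Euc n), IsOpen U ∧ x ∈ U ∧
    ∃ (e : Euc n ≃ₗᵢ[ℝ] Euc n) (i₀ : Fin n) (f : Euc n → ℝ) (K : NNReal),
      LipschitzWith K f ∧ (∀ y t, f (updCoord y i₀ t) = f y) ∧
      s ∩ U = {y ∈ U | f (e y) < e y i₀}

/-- `A` compactly contained in `Ω`. -/
def CompactlyIn {n : ℕ} (A Ω : Set (Euc n)) : Prop :=
  IsOpen A ∧ IsCompact (closure A) ∧ closure A ⊆ Ω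

/-- Weak `L¹(Ω)` convergence of scalar functions. -/
def WeakL1TendstoS {n : ℕ} (Ω : Set (Euc n)) (F : ℕ → Euc n → ℝ) (F₀ : Euc n → ℝ) : Prop :=
  ∀ g : Euc n → ℝ, Measurable g → (∃ M, ∀ x, |g x| ≤ M) →
    Tendsto (fun k => ∫ x in Ω, g x * F k x) atTop (nhds (∫ x in Ω, g x * F₀ x))

/-- Strong (modular) convergence in the variable exponent space `L^{q(·)}(Ω;ℝ^d)`. -/
def TendstoModular {n d : ℕ} (Ω : Set (Euc n)) (q : Euc n → ℝ)
    (us : ℕ → Euc n → Euc d) (u : Euc n → Euc d) : Prop :=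
  Tendsto (fun k => ∫⁻ x in Ω, ENNReal.ofReal (‖us k x - u x‖ ^ q x)) atTop (nhds 0)

/-- Luxemburg norm of a nonnegative scalar "modulus" function on `Ω`. -/
def luxNorm {n : ℕ} (Ω : Set (Euc n)) (p : Euc n → ℝ) (f : Euc n → ℝ) : ℝ :=
  sInf {lam : ℝ | 0 < lam ∧ emod Ω p (fun x => f x / lam) ≤ 1}

/-- Sobolev (Luxemburg) norm of `u` with gradient `G` in `W^{1,p(·)}(Ω;ℝ^d)`. -/
def sobNorm {n d : ℕ} (Ω : Set (Euc n)) (p : Euc n → ℝ)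
    (u : Euc n → Euc d) (G : Euc n → Mat d n) : ℝ :=
  sInf {lam : ℝ | 0 < lam ∧
    (∫⁻ x in Ω, (ENNReal.ofReal ((‖u x‖ / lam) ^ p x)
      + ENNReal.ofReal ((mnorm (G x) / lam) ^ p x))) ≤ 1}

/-- Membership in `W^{1,p(·)}(Ω;ℝ^d)` with weak gradient `G`. -/
def MemW1pVar {n d : ℕ} (Ω : Set (Euc n)) (p : Euc n → ℝ)
    (u : Euc n → Euc d) (G : Euc n → Mat d n) : Prop :=
  AEStronglyMeasurable u (volume.restrict Ω) ∧
  (∀ i j, AEMeasurable (fun x => G x i j) (volume.restrict Ω)) ∧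
  IsWeakGrad Ω u G ∧
  emod Ω p (fun x => ‖u x‖) < ⊤ ∧ emod Ω p (fun x => mnorm (G x)) < ⊤

/-! ### Interior cones -/

/-- Uniform interior cone condition near a boundary point: this is the only way the Lipschitz
boundary enters. The cone is encoded by the ball `closedBall c r` of its directions. -/
lemma exists_cone {N : ℕ} {Ω : Set (Euc N)} (hΩ : IsOpen Ω) (hL : HasLipschitzBoundary Ω)
    {x₀ : Euc N} (hx₀ : x₀ ∈ closure Ω) :
    ∃ (c : Euc N) (r δ : ℝ), 0 < r ∧ 0 < δ ∧ ∀ x ∈ Ω, dist x x₀ < δ → ∀ t : ℝ, 0 < t → t ≤ δ →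
      ∀ w ∈ Metric.closedBall c r, x + t • w ∈ Ω := by
  -- points near `x₀`, moved by a short step in a bounded direction, stay in `U`
  have key : ∀ (U : Set (Euc N)), IsOpen U → x₀ ∈ U → ∀ M : ℝ, 0 < M → ∃ δ > 0, ∀ x : Euc N,
      dist x x₀ < δ → ∀ t : ℝ, 0 < t → t ≤ δ → ∀ w : Euc N, ‖w‖ ≤ M → x + t • w ∈ U := by
    intro U hU hxU M hM
    obtain ⟨η, hη, hηU⟩ := Metric.isOpen_iff.1 hU x₀ hxU
    refine ⟨η / (1 + M), by positivity, fun x hx t ht htδ w hw => hηU ?_⟩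
    rw [Metric.mem_ball, dist_eq_norm]
    rw [dist_eq_norm] at hx
    have h1 : ‖t • w‖ ≤ η / (1 + M) * M := by
      rw [norm_smul, Real.norm_of_nonneg ht.le]
      gcongr
    calc ‖x + t • w - x₀‖ = ‖(x - x₀) + t • w‖ := by congr 1; abel
      _ ≤ ‖x - x₀‖ + ‖t • w‖ := norm_add_le _ _
      _ < η / (1 + M) + η / (1 + M) * M := by linarith
      _ = η := by field_simp
  by_cases hx : x₀ ∈ Ω
  · obtain ⟨δ, hδ, h⟩ := key Ω hΩ hx 1 one_pos
    refine ⟨0, 1, δ, one_pos, hδ, fun x _ hxδ t ht htδ w hw => h x hxδ t ht htδ w ?_⟩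
    simpa using hw
  · have hfr : x₀ ∈ frontier Ω := by rw [hΩ.frontier_eq]; exact ⟨hx₀, hx⟩
    obtain ⟨U, hU, hxU, e, i₀, f, K, hf, hfinv, hs⟩ := hL x₀ hfr
    set v : Euc N := EuclideanSpace.single i₀ 1 with hv
    have hvn : ‖v‖ = 1 := by simp [hv]
    have hshift : ∀ (z : Euc N) (s : ℝ), f (z + s • v) = f z := by
      intro z s
      rw [← hfinv z (z i₀ + s)]
      congr 1
      ext j
      by_cases hj : j = i₀
      · subst hj; simp [updCoord, hv]
      · simp [updCoord, hv, hj]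
    -- a direction within `r` of the vertical axis gains height at least `1 - r` per unit step,
    -- while `f` grows by at most `K * r = 1 - r`
    set r : ℝ := 1 / (K + 1) with hr
    have hrpos : 0 < r := by positivity
    have hrK : K * r + r = 1 := by rw [hr]; field_simp
    obtain ⟨δ, hδ, h⟩ := key U hU hxU (1 + r) (by positivity)
    refine ⟨e.symm v, r, δ, hrpos, hδ, fun x hxΩ hxδ t ht htδ w hw => ?_⟩
    have hxU : x ∈ U := by
      have := h x hxδ δ hδ le_rfl 0 (by simp; positivity)
      simpa using this
    rw [Metric.mem_closedBall, dist_eq_norm] at hw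
    have hew : ‖e w - v‖ ≤ r := by
      have : e w - v = e (w - e.symm v) := by simp
      rw [this, e.norm_map]; exact hw
    have hwn : ‖w‖ ≤ 1 + r := by
      rw [← e.norm_map w]
      calc ‖e w‖ = ‖v + (e w - v)‖ := by congr 1; abel
        _ ≤ _ := norm_add_le _ _
        _ ≤ 1 + r := by rw [hvn]; linarith
    have hmem := h x hxδ t ht htδ w hwn
    have hx1 : f (e x) < e x i₀ := by
      have : x ∈ Ω ∩ U := ⟨hxΩ, hxU⟩
      rw [hs] at this; exact this.2
    have : x + t • w ∈ Ω ∩ U := by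
      rw [hs]
      refine ⟨hmem, ?_⟩
      have e1 : e (x + t • w) = (e x + t • (e w - v)) + t • v := by
        rw [map_add, map_smul, smul_sub]; abel
      have e2 : f (e (x + t • w)) ≤ f (e x) + K * (t * r) := by
        rw [e1, hshift]
        have := hf.dist_le_mul (e x + t • (e w - v)) (e x)
        rw [Real.dist_eq, dist_eq_norm, add_sub_cancel_left, norm_smul,
          Real.norm_of_nonneg ht.le] at this
        have h3 := (le_abs_self _).trans this
        have h4 : (K : ℝ) * (t * ‖e w - v‖) ≤ K * (t * r) := by gcongr
        linarith
      have e3 : e x i₀ + t * (1 - r) ≤ e (x + t • w) i₀ := by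
        have h5 : |(e w - v) i₀| ≤ r := by
          have := PiLp.norm_apply_le (e w - v) i₀
          rw [Real.norm_eq_abs] at this
          exact this.trans hew
        have h6 := (abs_le.1 h5).1
        have h7 : e (x + t • w) i₀ = e x i₀ + t * (1 + (e w - v) i₀) := by
          rw [e1]; simp [hv]; ring
        rw [h7]
        have : t * (1 - r) ≤ t * (1 + (e w - v) i₀) := by
          apply mul_le_mul_of_nonneg_left _ ht.le; linarith
        linarith
      have : t * (K * r + r) = t := by rw [hrK, mul_one]
      nlinarith
    exact this.1

/-! ### Averages over cones and their derivative in the scale -/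

/-- The rescaled kernel `y ↦ t⁻ᴺ ρ((y - x) / t)`; for `ρ` of integral one supported in a ball
of directions, integrating against it averages over a piece of the cone with vertex `x`. -/
def mollKer {N : ℕ} (ρ : Euc N → ℝ) (t : ℝ) (x y : Euc N) : ℝ :=
  (t ^ N)⁻¹ * ρ (t⁻¹ • (y - x))

/-- The `j`-th component of the vector field `t⁻ᴺ w ρ(w)`, `w = (y - x) / t`, whose divergence
in `y` is minus the `t`-derivative of `mollKer ρ t x y`. -/
def mollField {N : ℕ} (ρ : Euc N → ℝ) (t : ℝ) (x : Euc N) (j : Fin N) (y : Euc N) : ℝ :=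
  (t ^ N)⁻¹ * ((t⁻¹ • (y - x)) j * ρ (t⁻¹ • (y - x)))

lemma mem_closedBall_of_ne {N : ℕ} {ρ : Euc N → ℝ} {c : Euc N} {r : ℝ}
    (hs : tsupport ρ ⊆ Metric.closedBall c r) {t : ℝ} (ht : 0 < t) {x y : Euc N}
    (h : ρ (t⁻¹ • (y - x)) ≠ 0) : y ∈ Metric.closedBall (x + t • c) (t * r) := by
  have h1 := hs (subset_tsupport _ h)
  rw [Metric.mem_closedBall, dist_eq_norm] at h1 ⊢
  have : y - (x + t • c) = t • (t⁻¹ • (y - x) - c) := by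
    rw [smul_sub, smul_inv_smul₀ ht.ne']; abel
  rw [this, norm_smul, Real.norm_of_nonneg ht.le]
  gcongr

lemma contDiff_mollField {N : ℕ} {ρ : Euc N → ℝ} (hρ : ContDiff ℝ (⊤ : ℕ∞) ρ) (t : ℝ)
    (x : Euc N) (j : Fin N) : ContDiff ℝ (⊤ : ℕ∞) (mollField ρ t x j) := by
  have h1 : ContDiff ℝ (⊤ : ℕ∞) (fun y : Euc N => t⁻¹ • (y - x)) := by fun_prop
  have h2 : ContDiff ℝ (⊤ : ℕ∞) (fun y : Euc N => (t⁻¹ • (y - x)) j) :=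
    (EuclideanSpace.proj j : Euc N →L[ℝ] ℝ).contDiff.comp h1
  exact contDiff_const.mul (h2.mul (hρ.comp h1))

lemma tsupport_mollField {N : ℕ} {ρ : Euc N → ℝ} {c : Euc N} {r : ℝ}
    (hs : tsupport ρ ⊆ Metric.closedBall c r) {t : ℝ} (ht : 0 < t) (x : Euc N) (j : Fin N) :
    tsupport (mollField ρ t x j) ⊆ Metric.closedBall (x + t • c) (t * r) := by
  refine closure_minimal (fun y hy => ?_) Metric.isClosed_closedBall
  apply mem_closedBall_of_ne hs ht
  intro h0
  exact hy (by simp [mollField, h0])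

lemma hasDerivAt_mollKer {N : ℕ} {ρ : Euc N → ℝ} (hρ : ContDiff ℝ (⊤ : ℕ∞) ρ) {t : ℝ}
    (ht : 0 < t) (x y : Euc N) :
    HasDerivAt (fun s => mollKer ρ s x y)
      (-((t ^ (N + 1))⁻¹ * (N * ρ (t⁻¹ • (y - x)) +
        fderiv ℝ ρ (t⁻¹ • (y - x)) (t⁻¹ • (y - x))))) t := by
  have hd : HasFDerivAt ρ (fderiv ℝ ρ (t⁻¹ • (y - x))) (t⁻¹ • (y - x)) :=
    ((hρ.differentiable (by simp)) _).hasFDerivAt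
  have h1 : HasDerivAt (fun s : ℝ => s⁻¹ • (y - x)) ((-(t ^ 2)⁻¹) • (y - x)) t :=
    (hasDerivAt_inv ht.ne').smul_const _
  have h2 := hd.comp_hasDerivAt t h1
  have h3 : HasDerivAt (fun s : ℝ => (s ^ N)⁻¹) (-(N * t ^ (N - 1)) / (t ^ N) ^ 2) t :=
    (hasDerivAt_pow N t).inv (by positivity)
  have h4 := h3.mul h2
  refine h4.congr_deriv ?_
  have e1 : (-(t ^ 2)⁻¹) • (y - x) = (-t⁻¹) • (t⁻¹ • (y - x)) := by
    rw [smul_smul]; congr 1; field_simp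
  rw [e1, map_smul]
  simp only [Function.comp, smul_eq_mul]
  rcases N with _ | n
  · simp
  · push_cast; field_simp; ring

lemma fderiv_mollField {N : ℕ} {ρ : Euc N → ℝ} (hρ : ContDiff ℝ (⊤ : ℕ∞) ρ) {t : ℝ}
    (ht : 0 < t) (x y : Euc N) (j : Fin N) :
    fderiv ℝ (mollField ρ t x j) y (EuclideanSpace.single j 1) =
      (t ^ (N + 1))⁻¹ * (ρ (t⁻¹ • (y - x)) + (t⁻¹ • (y - x)) j *
        fderiv ℝ ρ (t⁻¹ • (y - x)) (EuclideanSpace.single j 1)) := by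
  have hd : HasFDerivAt ρ (fderiv ℝ ρ (t⁻¹ • (y - x))) (t⁻¹ • (y - x)) :=
    ((hρ.differentiable (by simp)) _).hasFDerivAt
  have h1 : HasFDerivAt (fun y : Euc N => t⁻¹ • (y - x))
      (t⁻¹ • ContinuousLinearMap.id ℝ (Euc N)) y :=
    ((hasFDerivAt_id y).sub_const x).const_smul t⁻¹
  have h2 := hd.comp y h1
  have h3 := (EuclideanSpace.proj j : Euc N →L[ℝ] ℝ).hasFDerivAt.comp y h1
  have h4 : HasFDerivAt (mollField ρ t x j) _ y := (h3.mul h2).const_mul ((t ^ N)⁻¹)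
  rw [h4.fderiv]
  simp
  field_simp
  ring

/-- The `t`-derivative of the rescaled kernel is minus a divergence in `y`. -/
lemma kernel_deriv_eq_neg_div {N : ℕ} {ρ : Euc N → ℝ} (hρ : ContDiff ℝ (⊤ : ℕ∞) ρ) {t : ℝ}
    (ht : 0 < t) (x y : Euc N) :
    -((t ^ (N + 1))⁻¹ * (N * ρ (t⁻¹ • (y - x)) +
        fderiv ℝ ρ (t⁻¹ • (y - x)) (t⁻¹ • (y - x)))) =
      - ∑ j, fderiv ℝ (mollField ρ t x j) y (EuclideanSpace.single j 1) := by
  simp_rw [fderiv_mollField hρ ht]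
  rw [← Finset.mul_sum, Finset.sum_add_distrib]
  simp only [Finset.sum_const, Finset.card_univ, Fintype.card_fin, nsmul_eq_mul]
  set w := t⁻¹ • (y - x)
  have hw : w = ∑ j, w j • EuclideanSpace.single j (1 : ℝ) := by
    ext i; simp [Finset.sum_apply, Pi.single_apply]
  have : fderiv ℝ ρ w w = ∑ j, w j * fderiv ℝ ρ w (EuclideanSpace.single j 1) := by
    have h := congrArg (fderiv ℝ ρ w) hw
    rw [map_sum] at h
    simpa using h
  rw [this]

lemma exists_bound_of_tsupport {N : ℕ} {ρ : Euc N → ℝ} {c : Euc N} {r : ℝ}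
    (hρ : ContDiff ℝ (⊤ : ℕ∞) ρ) (hs : tsupport ρ ⊆ Metric.closedBall c r) :
    ∃ B : ℝ, 0 ≤ B ∧ (∀ w, |ρ w| ≤ B) ∧ ∀ w, |N * ρ w + fderiv ℝ ρ w w| ≤ B := by
  have hc : HasCompactSupport ρ :=
    (isCompact_closedBall c r).of_isClosed_subset (isClosed_tsupport _) hs
  have hcont : Continuous (fun w => N * ρ w + fderiv ℝ ρ w w) := by
    have := hρ.continuous_fderiv (by simp)
    have h2 := hρ.continuous
    fun_prop
  have hc2 : HasCompactSupport (fun w => N * ρ w + fderiv ℝ ρ w w) := by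
    refine HasCompactSupport.intro hc (fun w hw => ?_)
    have h1 : ρ w = 0 := image_eq_zero_of_notMem_tsupport hw
    have h2 : fderiv ℝ ρ w = 0 :=
      image_eq_zero_of_notMem_tsupport (fun h => hw (tsupport_fderiv_subset ℝ h))
    simp [h1, h2]
  obtain ⟨B1, hB1⟩ := hρ.continuous.bounded_above_of_compact_support hc
  obtain ⟨B2, hB2⟩ := hcont.bounded_above_of_compact_support hc2
  refine ⟨max B1 B2, ?_, fun w => ?_, fun w => ?_⟩
  · exact le_max_of_le_left ((norm_nonneg _).trans (hB1 0))
  · exact (hB1 w).trans (le_max_left _ _)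
  · exact (hB2 w).trans (le_max_right _ _)

lemma continuous_mollKer {N : ℕ} {ρ : Euc N → ℝ} (hρ : Continuous ρ) (t : ℝ) :
    Continuous (fun z : Euc N × Euc N => mollKer ρ t z.1 z.2) := by
  unfold mollKer; fun_prop

lemma abs_mollKer_le {N : ℕ} {ρ : Euc N → ℝ} {B : ℝ} (hB : ∀ w, |ρ w| ≤ B) {t : ℝ} (ht : 0 < t)
    (x y : Euc N) : |mollKer ρ t x y| ≤ (t ^ N)⁻¹ * B := by
  rw [mollKer, abs_mul, abs_of_pos (by positivity)]
  gcongr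
  exact hB _

lemma integrable_mollKer_mul {N : ℕ} {Ω : Set (Euc N)} {ρ : Euc N → ℝ} (hρ : Continuous ρ) {B : ℝ}
    (hB : ∀ w, |ρ w| ≤ B) {t : ℝ} (ht : 0 < t) (x : Euc N) {v : Euc N → ℝ}
    (hv : IntegrableOn v Ω) : IntegrableOn (fun y => mollKer ρ t x y * v y) Ω := by
  refine Integrable.bdd_mul hv (c := (t ^ N)⁻¹ * B) ?_ ?_
  · exact (by unfold mollKer; fun_prop : Continuous (mollKer ρ t x)).aestronglyMeasurable
  · exact Eventually.of_forall fun y => abs_mollKer_le hB ht x y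

/-- Differentiating the cone average in the scale `t` produces only the weak gradient: the
`t`-derivative of the kernel is a divergence of a test field compactly supported in `Ω`. -/
lemma hasDerivAt_coneAvg {N : ℕ} {Ω : Set (Euc N)} {ρ : Euc N → ℝ} {c : Euc N} {r : ℝ}
    (hρ : ContDiff ℝ (⊤ : ℕ∞) ρ) (hs : tsupport ρ ⊆ Metric.closedBall c r)
    {v : Euc N → ℝ} {F : Euc N → Fin N → ℝ} (hv : IntegrableOn v Ω)
    (hw : ∀ φ : Euc N → ℝ, ContDiff ℝ (⊤ : ℕ∞) φ → HasCompactSupport φ → tsupport φ ⊆ Ω →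
      ∀ j : Fin N, ∫ y in Ω, φ y * F y j =
        - ∫ y in Ω, (fderiv ℝ φ y (EuclideanSpace.single j 1)) * v y)
    {x : Euc N} {t : ℝ} (ht : 0 < t) (hx : Metric.closedBall (x + t • c) (t * r) ⊆ Ω) :
    HasDerivAt (fun s => ∫ y in Ω, mollKer ρ s x y * v y)
      (∑ j, ∫ y in Ω, mollField ρ t x j y * F y j) t := by
  obtain ⟨B, hB0, hB1, hB2⟩ := exists_bound_of_tsupport hρ hs
  have hρc := hρ.continuous
  have hfc := hρ.continuous_fderiv (by simp)
  have hI : Ioi (t / 2) ∈ 𝓝 t := Ioi_mem_nhds (by linarith)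
  have main := hasDerivAt_integral_of_dominated_loc_of_deriv_le
    (μ := volume.restrict Ω) (𝕜 := ℝ) (x₀ := t) (s := Ioi (t / 2))
    (F := fun s y => mollKer ρ s x y * v y)
    (F' := fun s y => -((s ^ (N + 1))⁻¹ * (N * ρ (s⁻¹ • (y - x)) +
        fderiv ℝ ρ (s⁻¹ • (y - x)) (s⁻¹ • (y - x)))) * v y)
    (bound := fun y => (((t / 2) ^ (N + 1))⁻¹ * B) * ‖v y‖) hI
    (by
      filter_upwards [hI] with s hs
      exact (integrable_mollKer_mul hρc hB1 (lt_trans (by positivity) hs) x hv).1)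
    (integrable_mollKer_mul hρc hB1 ht x hv)
    (by
      refine AEStronglyMeasurable.mul (Continuous.aestronglyMeasurable ?_) hv.1
      fun_prop)
    (by
      refine Eventually.of_forall fun y s hs => ?_
      have hs0 : 0 < s := lt_trans (by positivity) hs
      rw [norm_mul, norm_neg, norm_mul, Real.norm_of_nonneg (by positivity)]
      have h1 : (s ^ (N + 1))⁻¹ ≤ ((t / 2) ^ (N + 1))⁻¹ := by
        have : t / 2 ≤ s := le_of_lt hs
        gcongr
      have h2 := hB2 (s⁻¹ • (y - x))
      rw [← Real.norm_eq_abs] at h2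
      gcongr)
    (hv.norm.const_mul _)
    (by
      refine Eventually.of_forall fun y s hs => ?_
      exact (hasDerivAt_mollKer hρ (lt_trans (by positivity) hs) x y).mul_const _)
  -- the derivative of the kernel is a divergence, so the weak gradient can be inserted
  refine main.2.congr_deriv ?_
  have hint : ∀ j, IntegrableOn
      (fun y => fderiv ℝ (mollField ρ t x j) y (EuclideanSpace.single j 1) * v y) Ω := by
    intro j
    have hcd := contDiff_mollField hρ t x j
    have hcs : HasCompactSupport (mollField ρ t x j) :=
      (isCompact_closedBall _ _).of_isClosed_subset (isClosed_tsupport _)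
        (tsupport_mollField hs ht x j)
    have hcont : Continuous
        (fun y => fderiv ℝ (mollField ρ t x j) y (EuclideanSpace.single j 1)) :=
      (hcd.continuous_fderiv (by simp)).clm_apply continuous_const
    have hcs2 : HasCompactSupport
        (fun y => fderiv ℝ (mollField ρ t x j) y (EuclideanSpace.single j 1)) :=
      hcs.fderiv_apply ℝ _
    obtain ⟨D, hD⟩ := hcont.bounded_above_of_compact_support hcs2
    exact Integrable.bdd_mul hv hcont.aestronglyMeasurable (Eventually.of_forall hD)
  calc ∫ y in Ω, -((t ^ (N + 1))⁻¹ * (N * ρ (t⁻¹ • (y - x)) +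
        fderiv ℝ ρ (t⁻¹ • (y - x)) (t⁻¹ • (y - x)))) * v y
      = ∫ y in Ω, -∑ j, fderiv ℝ (mollField ρ t x j) y (EuclideanSpace.single j 1) * v y := by
        congr 1; ext y
        rw [kernel_deriv_eq_neg_div hρ ht, neg_mul, Finset.sum_mul]
    _ = ∑ j, -∫ y in Ω, fderiv ℝ (mollField ρ t x j) y (EuclideanSpace.single j 1) * v y := by
        rw [integral_neg, integral_finsetSum _ fun j _ => hint j, Finset.sum_neg_distrib]
    _ = _ := by
        refine Finset.sum_congr rfl fun j _ => ?_
        rw [hw _ (contDiff_mollField hρ t x j) ?_ ?_ j]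
        · exact (isCompact_closedBall _ _).of_isClosed_subset (isClosed_tsupport _)
            (tsupport_mollField hs ht x j)
        · exact (tsupport_mollField hs ht x j).trans hx

/-! ### Pointwise error of the cone averages -/

/-- The average of `g` over the ball `closedBall (x + t c) (t r)`, a slice of the cone with
vertex `x`; it is normalised by `tᴺ` rather than by the volume of the ball. -/
def coneAvg {N : ℕ} (g : Euc N → ℝ≥0∞) (c : Euc N) (r t : ℝ) (x : Euc N) : ℝ≥0∞ :=
  ENNReal.ofReal ((t ^ N)⁻¹) * ∫⁻ y in Metric.closedBall (x + t • c) (t * r), g y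

/-- The `t`-derivative of the cone average is bounded by the ball average of any majorant `g` of the
gradient. -/
lemma enorm_sum_mollField_le {N : ℕ} {Ω S : Set (Euc N)} {ρ : Euc N → ℝ} {c : Euc N} {r B : ℝ}
    (hr : 0 < r) (hs : tsupport ρ ⊆ Metric.closedBall c r) (hB : ∀ w, |ρ w| ≤ B)
    {F : Euc N → Fin N → ℝ} {g : Euc N → ℝ≥0∞} (hg : ∀ y ∈ S, ∀ j, ‖F y j‖ₑ ≤ g y)
    {x : Euc N} {t : ℝ} (ht : 0 < t) (hx : Metric.closedBall (x + t • c) (t * r) ⊆ S) :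
    ‖∑ j, ∫ y in Ω, mollField ρ t x j y * F y j‖ₑ ≤
      ENNReal.ofReal (N * ((‖c‖ + r) * B)) * coneAvg g c r t x := by
  have hB0 : 0 ≤ B := (abs_nonneg _).trans (hB 0)
  have hone : ∀ j, ‖∫ y in Ω, mollField ρ t x j y * F y j‖ₑ ≤
      ENNReal.ofReal ((‖c‖ + r) * B) * coneAvg g c r t x := by
    intro j
    calc ‖∫ y in Ω, mollField ρ t x j y * F y j‖ₑ
        ≤ ∫⁻ y in Ω, ‖mollField ρ t x j y * F y j‖ₑ := enorm_integral_le_lintegral_enorm _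
      _ ≤ ∫⁻ y, ‖mollField ρ t x j y * F y j‖ₑ := setLIntegral_le_lintegral _ _
      _ ≤ ∫⁻ y, (Metric.closedBall (x + t • c) (t * r)).indicator
            (fun y => ENNReal.ofReal ((t ^ N)⁻¹ * ((‖c‖ + r) * B)) * g y) y := by
          refine lintegral_mono fun y => ?_
          by_cases h0 : ρ (t⁻¹ • (y - x)) = 0
          · simp [mollField, h0]
          · have hy := mem_closedBall_of_ne hs ht h0
            rw [indicator_of_mem hy, enorm_mul]
            refine mul_le_mul' ?_ (hg y (hx hy) j)
            rw [Real.enorm_eq_ofReal_abs]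
            refine ENNReal.ofReal_le_ofReal ?_
            rw [mollField, abs_mul, abs_of_pos (by positivity), abs_mul]
            have h1 : |(t⁻¹ • (y - x)) j| ≤ ‖c‖ + r := by
              have h2 := PiLp.norm_apply_le (t⁻¹ • (y - x)) j
              have h3 := hs (subset_tsupport _ h0)
              rw [Metric.mem_closedBall, dist_eq_norm] at h3
              have h4 := norm_le_norm_add_norm_sub' (t⁻¹ • (y - x)) c
              rw [Real.norm_eq_abs] at h2
              linarith
            gcongr
            exact hB _
      _ = _ := by
          rw [lintegral_indicator Metric.isClosed_closedBall.measurableSet,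
            lintegral_const_mul' _ _ ENNReal.ofReal_ne_top, coneAvg,
            ENNReal.ofReal_mul (by positivity)]
          ring
  calc ‖∑ j, ∫ y in Ω, mollField ρ t x j y * F y j‖ₑ
      ≤ ∑ j, ‖∫ y in Ω, mollField ρ t x j y * F y j‖ₑ := enorm_sum_le _ _
    _ ≤ ∑ _j : Fin N, ENNReal.ofReal ((‖c‖ + r) * B) * coneAvg g c r t x :=
        Finset.sum_le_sum fun j _ => hone j
    _ = _ := by
        rw [Finset.sum_const, Finset.card_univ, Fintype.card_fin, nsmul_eq_mul,
          ENNReal.ofReal_mul (Nat.cast_nonneg N), ENNReal.ofReal_natCast, mul_assoc]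

/-- The cone averages at two scales `s ≤ ε` differ by at most the integral over the scales of the
ball averages of a majorant of the gradient. -/
lemma enorm_sub_coneAvg_le {N : ℕ} {Ω S : Set (Euc N)} {ρ : Euc N → ℝ} {c : Euc N} {r B : ℝ}
    (hr : 0 < r) (hρ : ContDiff ℝ (⊤ : ℕ∞) ρ) (hs : tsupport ρ ⊆ Metric.closedBall c r)
    (hB : ∀ w, |ρ w| ≤ B) (hSΩ : S ⊆ Ω)
    {v : Euc N → ℝ} {F : Euc N → Fin N → ℝ} (hv : IntegrableOn v Ω)
    (hw : ∀ φ : Euc N → ℝ, ContDiff ℝ (⊤ : ℕ∞) φ → HasCompactSupport φ → tsupport φ ⊆ Ω →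
      ∀ j : Fin N, ∫ y in Ω, φ y * F y j =
        - ∫ y in Ω, (fderiv ℝ φ y (EuclideanSpace.single j 1)) * v y)
    {g : Euc N → ℝ≥0∞} (hg : ∀ y ∈ S, ∀ j, ‖F y j‖ₑ ≤ g y)
    {x : Euc N} {s ε : ℝ} (hs0 : 0 < s) (hsε : s ≤ ε)
    (hx : ∀ t, 0 < t → t ≤ ε → Metric.closedBall (x + t • c) (t * r) ⊆ S) :
    ‖(∫ y in Ω, mollKer ρ ε x y * v y) - ∫ y in Ω, mollKer ρ s x y * v y‖ₑ ≤
      ∫⁻ t in Ioc 0 ε, ENNReal.ofReal (N * ((‖c‖ + r) * B)) * coneAvg g c r t x := by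
  set U : ℝ → ℝ := fun t => ∫ y in Ω, mollKer ρ t x y * v y with hU
  set R := ∫⁻ t in Ioc 0 ε, ENNReal.ofReal (N * ((‖c‖ + r) * B)) * coneAvg g c r t x with hR
  -- a finite right-hand side is what makes the derivative integrable in the scale
  by_cases htop : R = ⊤
  · rw [htop]; exact le_top
  have hd : ∀ t, 0 < t → t ≤ ε → HasDerivAt U (deriv U t) t ∧
      ‖deriv U t‖ₑ ≤ ENNReal.ofReal (N * ((‖c‖ + r) * B)) * coneAvg g c r t x := by
    intro t ht htε
    have h := hasDerivAt_coneAvg hρ hs hv hw ht ((hx t ht htε).trans hSΩ)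
    have h2 : deriv U t = _ := h.deriv
    refine ⟨h2 ▸ h, ?_⟩
    rw [h2]
    exact enorm_sum_mollField_le hr hs hB hg ht (hx t ht htε)
  have hle : ∫⁻ t in Ioc s ε, ‖deriv U t‖ₑ ≤ R := by
    calc ∫⁻ t in Ioc s ε, ‖deriv U t‖ₑ
        ≤ ∫⁻ t in Ioc s ε, ENNReal.ofReal (N * ((‖c‖ + r) * B)) * coneAvg g c r t x :=
          setLIntegral_mono' measurableSet_Ioc fun t ht => (hd t (hs0.trans ht.1) ht.2).2
      _ ≤ R := lintegral_mono_set (Ioc_subset_Ioc_left hs0.le)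
  have hint : IntervalIntegrable (deriv U) volume s ε := by
    rw [intervalIntegrable_iff_integrableOn_Ioc_of_le hsε]
    exact ⟨(measurable_deriv U).aestronglyMeasurable, lt_of_le_of_lt hle (lt_top_iff_ne_top.2 htop)⟩
  have hftc := intervalIntegral.integral_eq_sub_of_hasDerivAt (a := s) (b := ε) (f := U)
    (f' := deriv U) (fun t ht => by
      rw [uIcc_of_le hsε] at ht
      exact (hd t (hs0.trans_le ht.1) ht.2).1) hint
  rw [← hftc, intervalIntegral.integral_of_le hsε]
  exact (enorm_integral_le_lintegral_enorm _).trans hle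

lemma integral_mollKer {N : ℕ} {ρ : Euc N → ℝ} (h1 : ∫ w, ρ w = 1) {t : ℝ} (ht : 0 < t)
    (x : Euc N) : ∫ y, mollKer ρ t x y = 1 := by
  unfold mollKer
  rw [integral_const_mul, integral_sub_right_eq_self (fun y => ρ (t⁻¹ • y)) x,
    Measure.integral_comp_smul, h1]
  simp [abs_of_pos ht]
  field_simp

/-- At almost every point the off-centre averages converge to the function as the scale shrinks;
the balls of directions are not centred at the vertex, so the differentiation theorem for balls
with moving centres is needed. -/
lemma ae_tendsto_mollKer {N : ℕ} {Ω : Set (Euc N)} (hΩ : MeasurableSet Ω) {ρ : Euc N → ℝ}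
    {c : Euc N} {r B : ℝ} (hr : 0 < r) (hρ : Continuous ρ)
    (hs : tsupport ρ ⊆ Metric.closedBall c r)
    (hB : ∀ w, |ρ w| ≤ B) (h1 : ∫ w, ρ w = 1) {v : Euc N → ℝ} (hv : IntegrableOn v Ω) :
    ∀ᵐ x, x ∈ Ω → Tendsto (fun t => ∫ y in Ω, mollKer ρ t x y * v y) (𝓝[>] 0) (𝓝 (v x)) := by
  set V := Ω.indicator v with hV
  have hVi : Integrable V := (integrable_indicator_iff hΩ).2 hv
  have hB0 : 0 ≤ B := (abs_nonneg _).trans (hB 0)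
  filter_upwards [IsUnifLocDoublingMeasure.ae_tendsto_average_norm_sub volume
    hVi.locallyIntegrable (‖c‖ / r)] with x hx hxΩ
  have hlim := hx (l := 𝓝[>] (0 : ℝ)) (fun t => x + t • c) (fun t => t * r) (by
      refine tendsto_nhdsWithin_iff.2 ⟨?_, ?_⟩
      · have : Tendsto (fun t : ℝ => t * r) (𝓝 0) (𝓝 (0 * r)) :=
          (continuous_id.mul continuous_const).tendsto 0
        rw [zero_mul] at this
        exact this.mono_left nhdsWithin_le_nhds
      · filter_upwards [self_mem_nhdsWithin] with t ht
        exact mul_pos ht hr) (by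
      filter_upwards [self_mem_nhdsWithin] with t ht
      have ht' : 0 < t := ht
      rw [Metric.mem_closedBall, dist_eq_norm]
      have : x - (x + t • c) = -(t • c) := by abel
      rw [this, norm_neg, norm_smul, Real.norm_of_nonneg ht'.le]
      apply le_of_eq
      field_simp)
  have hVx : V x = v x := indicator_of_mem hxΩ v
  -- `κ` bounds the supremum of the kernel times the volume of the ball, uniformly in `t`
  set κ : ℝ := B * (r ^ N * volume.real (Metric.ball (0 : Euc N) 1)) with hκ
  have hlim2 := hlim.const_mul κ
  rw [mul_zero] at hlim2
  rw [tendsto_iff_norm_sub_tendsto_zero]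
  refine squeeze_zero' (Eventually.of_forall fun _ => norm_nonneg _) ?_ hlim2
  filter_upwards [self_mem_nhdsWithin] with t ht
  have ht' : 0 < t := ht
  set b := Metric.closedBall (x + t • c) (t * r) with hb
  have hkc : Continuous (mollKer ρ t x) := by unfold mollKer; fun_prop
  have hsupp : ∀ y, y ∉ b → mollKer ρ t x y = 0 := by
    intro y hy
    by_contra h
    exact hy (mem_closedBall_of_ne hs ht' fun h0 => h (by simp [mollKer, h0]))
  have hkcs : HasCompactSupport (mollKer ρ t x) :=
    HasCompactSupport.intro (isCompact_closedBall _ _) hsupp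
  have e1 : ∫ y in Ω, mollKer ρ t x y * v y = ∫ y, mollKer ρ t x y * V y := by
    rw [← integral_indicator hΩ]
    congr 1; ext y
    by_cases hy : y ∈ Ω <;> simp [hV, hy]
  have i1 : Integrable (fun y => mollKer ρ t x y * V y) :=
    Integrable.bdd_mul hVi hkc.aestronglyMeasurable
      (Eventually.of_forall fun y => abs_mollKer_le hB ht' x y)
  have i2 : Integrable (fun y => mollKer ρ t x y * v x) :=
    (hkc.integrable_of_hasCompactSupport hkcs).mul_const _
  have e3 : (∫ y in Ω, mollKer ρ t x y * v y) - v x =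
      ∫ y, mollKer ρ t x y * (V y - V x) := by
    simp_rw [mul_sub, hVx]
    rw [integral_sub i1 i2, integral_mul_const, integral_mollKer h1 ht', one_mul, e1]
  rw [e3]
  have hvol : volume.real b = t ^ N * (r ^ N * volume.real (Metric.ball (0 : Euc N) 1)) := by
    rw [hb, Measure.real, Measure.addHaar_closedBall _ _ (by positivity), ENNReal.toReal_mul,
      ENNReal.toReal_ofReal (by positivity)]
    simp [Measure.real, mul_pow, mul_assoc]
  have i3 : Integrable (fun y => b.indicator (fun y => (t ^ N)⁻¹ * B * ‖V y - V x‖) y) := by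
    rw [integrable_indicator_iff Metric.isClosed_closedBall.measurableSet]
    refine Integrable.const_mul (Integrable.norm ?_) _
    refine hVi.integrableOn.sub ?_
    exact integrableOn_const (by
      exact (measure_closedBall_lt_top).ne)
  calc ‖∫ y, mollKer ρ t x y * (V y - V x)‖
      ≤ ∫ y, b.indicator (fun y => (t ^ N)⁻¹ * B * ‖V y - V x‖) y := by
        refine norm_integral_le_of_norm_le i3 (Eventually.of_forall fun y => ?_)
        by_cases hy : y ∈ b
        · rw [indicator_of_mem hy, norm_mul]
          gcongr
          exact abs_mollKer_le hB ht' x y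
        · rw [indicator_of_notMem hy, hsupp y hy]; simp
    _ = κ * ⨍ y in b, ‖V y - V x‖ := by
        rw [integral_indicator Metric.isClosed_closedBall.measurableSet, integral_const_mul,
          setAverage_eq, hvol, hκ, smul_eq_mul]
        have : 0 < volume.real (Metric.ball (0 : Euc N) 1) :=
          ENNReal.toReal_pos (Metric.measure_ball_pos _ _ one_pos).ne' measure_ball_lt_top.ne
        field_simp
        rfl

/-- Pointwise control of the error of the cone average by averages of the gradient. -/
lemma ae_enorm_sub_le {N : ℕ} {Ω S : Set (Euc N)} (hΩ : MeasurableSet Ω)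
    {ρ : Euc N → ℝ} {c : Euc N} {r B : ℝ}
    (hr : 0 < r) (hρ : ContDiff ℝ (⊤ : ℕ∞) ρ) (hs : tsupport ρ ⊆ Metric.closedBall c r)
    (hB : ∀ w, |ρ w| ≤ B) (h1 : ∫ w, ρ w = 1) (hSΩ : S ⊆ Ω)
    {v : Euc N → ℝ} {F : Euc N → Fin N → ℝ} (hv : IntegrableOn v Ω)
    (hw : ∀ φ : Euc N → ℝ, ContDiff ℝ (⊤ : ℕ∞) φ → HasCompactSupport φ → tsupport φ ⊆ Ω →
      ∀ j : Fin N, ∫ y in Ω, φ y * F y j =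
        - ∫ y in Ω, (fderiv ℝ φ y (EuclideanSpace.single j 1)) * v y)
    {g : Euc N → ℝ≥0∞} (hg : ∀ y ∈ S, ∀ j, ‖F y j‖ₑ ≤ g y) {ε : ℝ} (hε : 0 < ε) :
    ∀ᵐ x, x ∈ Ω → (∀ t, 0 < t → t ≤ ε → Metric.closedBall (x + t • c) (t * r) ⊆ S) →
      ‖v x - ∫ y in Ω, mollKer ρ ε x y * v y‖ₑ ≤
      ∫⁻ t in Ioc 0 ε, ENNReal.ofReal (N * ((‖c‖ + r) * B)) * coneAvg g c r t x := by
  filter_upwards [ae_tendsto_mollKer hΩ hr hρ.continuous hs hB h1 hv] with x hx hxΩ hxS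
  have hl := (tendsto_const_nhds (x := ∫ y in Ω, mollKer ρ ε x y * v y)).sub (hx hxΩ)
  have hl2 := (continuous_enorm.tendsto _).comp hl
  rw [← enorm_neg, neg_sub]
  refine le_of_tendsto hl2 ?_
  filter_upwards [Ioc_mem_nhdsGT hε] with s hs'
  exact enorm_sub_coneAvg_le hr hρ hs hB hSΩ hv hw hg hs'.1 hs'.2 hxS

/-! ### Power estimates for the averages -/

/-- Jensen's inequality for a finite measure that need not be normalised. -/
lemma lintegral_rpow_le_measure_mul {α : Type*} [MeasurableSpace α] (μ : Measure α)
    {f : α → ℝ≥0∞} (hf : AEMeasurable f μ) {q : ℝ} (hq : 1 ≤ q) :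
    (∫⁻ x, f x ∂μ) ^ q ≤ μ univ ^ (q - 1) * ∫⁻ x, f x ^ q ∂μ := by
  rcases hq.eq_or_lt with rfl | hq1
  · simp
  have hc := Real.HolderConjugate.conjExponent hq1
  have h := ENNReal.lintegral_mul_le_Lp_mul_Lq μ hc hf (aemeasurable_const (b := (1 : ℝ≥0∞)))
  simp only [Pi.mul_apply, mul_one, ENNReal.one_rpow, lintegral_one] at h
  have h2 := ENNReal.rpow_le_rpow h (by linarith : (0 : ℝ) ≤ q)
  rw [ENNReal.mul_rpow_of_nonneg _ _ (by linarith), ← ENNReal.rpow_mul, ← ENNReal.rpow_mul] at h2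
  have e1 : 1 / q * q = 1 := by field_simp
  have e2 : 1 / q.conjExponent * q = q - 1 := by
    rw [Real.conjExponent]
    have : q - 1 ≠ 0 := by linarith
    field_simp
  rw [e1, e2, ENNReal.rpow_one, mul_comm] at h2
  exact h2

/-- The mass of `h` on the ball `closedBall (x + t c) (t r)`. -/
def slice {N : ℕ} (h : Euc N → ℝ≥0∞) (c : Euc N) (r t : ℝ) (x : Euc N) : ℝ≥0∞ :=
  ∫⁻ y in Metric.closedBall (x + t • c) (t * r), h y

lemma measurable_slice_aux {N : ℕ} {h : Euc N → ℝ≥0∞} (hh : Measurable h) (c : Euc N) (r : ℝ) :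
    Measurable (fun z : (ℝ × Euc N) × Euc N =>
      (Metric.closedBall (z.1.2 + z.1.1 • c) (z.1.1 * r)).indicator h z.2) := by
  have hS : MeasurableSet {z : (ℝ × Euc N) × Euc N |
      dist z.2 (z.1.2 + z.1.1 • c) ≤ z.1.1 * r} :=
    (isClosed_le (by fun_prop) (by fun_prop)).measurableSet
  exact (hh.comp measurable_snd).indicator hS

lemma slice_eq {N : ℕ} (h : Euc N → ℝ≥0∞) (c : Euc N) (r t : ℝ) (x : Euc N) :
    slice h c r t x = ∫⁻ y, (Metric.closedBall (x + t • c) (t * r)).indicator h y := by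
  rw [slice, lintegral_indicator Metric.isClosed_closedBall.measurableSet]

lemma measurable_slice {N : ℕ} {h : Euc N → ℝ≥0∞} (hh : Measurable h) (c : Euc N) (r : ℝ) :
    Measurable (fun z : ℝ × Euc N => slice h c r z.1 z.2) := by
  simp_rw [slice_eq]
  exact (measurable_slice_aux hh c r).lintegral_prod_right'

lemma measurable_slice_right {N : ℕ} {h : Euc N → ℝ≥0∞} (hh : Measurable h) (c : Euc N)
    (r t : ℝ) : Measurable (fun x => slice h c r t x) := by
  have h1 := measurable_slice hh c r
  generalize slice h c r = S at h1 ⊢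
  exact h1.comp (measurable_prodMk_left (x := t))

lemma measurable_slice_left {N : ℕ} {h : Euc N → ℝ≥0∞} (hh : Measurable h) (c : Euc N)
    (r : ℝ) (x : Euc N) : Measurable (fun t => slice h c r t x) := by
  have h1 := measurable_slice hh c r
  generalize slice h c r = S at h1 ⊢
  exact h1.comp (measurable_prodMk_right (y := x))

lemma volume_closedBall_scale {N : ℕ} (x : Euc N) {t r : ℝ} (ht : 0 < t) (hr : 0 < r) :
    volume (Metric.closedBall x (t * r)) = ENNReal.ofReal t ^ (N : ℝ) *
      volume (Metric.closedBall (0 : Euc N) r) := by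
  rw [Measure.addHaar_closedBall _ _ (by positivity), Measure.addHaar_closedBall _ _ hr.le,
    mul_pow, ENNReal.ofReal_mul (by positivity), ENNReal.rpow_natCast,
    ENNReal.ofReal_pow ht.le]
  simp [mul_assoc]

/-- By Fubini, each `y` is counted by the set of those `x` whose ball contains it, which is itself a
ball of radius `t r`. -/
lemma lintegral_slice {N : ℕ} {h : Euc N → ℝ≥0∞} (hh : Measurable h) (c : Euc N) {r t : ℝ}
    (hr : 0 < r) (ht : 0 < t) :
    ∫⁻ x, slice h c r t x = ENNReal.ofReal t ^ (N : ℝ) *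
      volume (Metric.closedBall (0 : Euc N) r) * ∫⁻ y, h y := by
  simp_rw [slice_eq]
  rw [lintegral_lintegral_swap]
  · have : ∀ y : Euc N, ∫⁻ x, (Metric.closedBall (x + t • c) (t * r)).indicator h y =
        ENNReal.ofReal t ^ (N : ℝ) * volume (Metric.closedBall (0 : Euc N) r) * h y := by
      intro y
      have e : ∀ x : Euc N, (Metric.closedBall (x + t • c) (t * r)).indicator h y =
          (Metric.closedBall (y - t • c) (t * r)).indicator (fun _ => h y) x := by
        intro x
        have hiff : y ∈ Metric.closedBall (x + t • c) (t * r) ↔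
            x ∈ Metric.closedBall (y - t • c) (t * r) := by
          rw [Metric.mem_closedBall, Metric.mem_closedBall, dist_comm x, dist_eq_norm,
            dist_eq_norm]
          have : y - (x + t • c) = y - t • c - x := by abel
          rw [this]
        by_cases hy : y ∈ Metric.closedBall (x + t • c) (t * r)
        · rw [indicator_of_mem hy, indicator_of_mem (hiff.1 hy)]
        · rw [indicator_of_notMem hy, indicator_of_notMem (fun h => hy (hiff.2 h))]
      simp_rw [e]
      rw [lintegral_indicator Metric.isClosed_closedBall.measurableSet, setLIntegral_const,
        volume_closedBall_scale _ ht hr, mul_comm]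
    simp_rw [this]
    rw [lintegral_const_mul _ hh]
  · have hm : Measurable (fun z : Euc N × Euc N => (((t, z.1), z.2) : (ℝ × Euc N) × Euc N)) := by
      fun_prop
    exact ((measurable_slice_aux hh c r).comp hm).aemeasurable

/-- The higher integrability estimate: an `a`-th power of the gradient controls the `q`-th power
of the ball average, at the price of the factor `t^(-1/2)`, as soon as `N (q / a - 1) ≤ 1 / 2`. -/
lemma coneAvg_rpow_le {N : ℕ} {g : Euc N → ℝ≥0∞} (hg : Measurable g) (c : Euc N) {r t : ℝ}
    (hr : 0 < r) (ht : 0 < t) (ht1 : t ≤ 1) {a q : ℝ} (ha : 1 ≤ a) (haq : a ≤ q)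
    (hq : N * (q / a - 1) ≤ 1 / 2) {β M : ℝ≥0∞} (hβ1 : 1 ≤ β)
    (hβ : volume (Metric.closedBall (0 : Euc N) r) ≤ β) (hM1 : 1 ≤ M)
    (hM : ∫⁻ y, g y ^ a ≤ M) (x : Euc N) :
    coneAvg g c r t x ^ q ≤ (β * M) ^ q *
      (ENNReal.ofReal t ^ (-(N : ℝ) - 1 / 2) * slice (fun y => g y ^ a) c r t x) := by
  set τ := ENNReal.ofReal t with hτ
  have hτ0 : τ ≠ 0 := by simpa [hτ] using ht
  have hτt : τ ≠ ⊤ := ENNReal.ofReal_ne_top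
  have hτ1 : τ ≤ 1 := by rw [hτ, ← ENNReal.ofReal_one]; exact ENNReal.ofReal_le_ofReal ht1
  have ha0 : 0 < a := by linarith
  have hq0 : 0 < q := by linarith
  set b := Metric.closedBall (x + t • c) (t * r)
  set H := slice (fun y => g y ^ a) c r t x with hH
  have hHM : H ≤ M := (setLIntegral_le_lintegral _ _).trans hM
  -- Jensen on the ball, then the power `q / a`
  have hI : (∫⁻ y in b, g y) ^ a ≤ (τ ^ (N : ℝ) * β) ^ (a - 1) * H := by
    refine (lintegral_rpow_le_measure_mul _ hg.aemeasurable ha).trans ?_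
    refine mul_le_mul' (ENNReal.rpow_le_rpow ?_ (by linarith)) le_rfl
    rw [Measure.restrict_apply_univ, volume_closedBall_scale _ ht hr]
    gcongr
  have e0 : ENNReal.ofReal ((t ^ N)⁻¹) = τ ^ (-(N : ℝ)) := by
    rw [ENNReal.rpow_neg, ENNReal.rpow_natCast, hτ, ← ENNReal.ofReal_pow ht.le,
      ENNReal.ofReal_inv_of_pos (by positivity)]
  have hIq : (∫⁻ y in b, g y) ^ q ≤
      τ ^ (N * (a - 1) * (q / a)) * β ^ ((a - 1) * (q / a)) * H ^ (q / a) := by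
    have e1 : (∫⁻ y in b, g y) ^ q = ((∫⁻ y in b, g y) ^ a) ^ (q / a) := by
      rw [← ENNReal.rpow_mul]; congr 1; field_simp
    rw [e1]
    refine (ENNReal.rpow_le_rpow hI (by positivity)).trans (le_of_eq ?_)
    rw [ENNReal.mul_rpow_of_nonneg _ _ (by positivity), ← ENNReal.rpow_mul,
      ENNReal.mul_rpow_of_nonneg _ _ (mul_nonneg (by linarith) (by positivity)),
      ← ENNReal.rpow_mul]
    congr 3; ring
  have hβq : β ^ ((a - 1) * (q / a)) ≤ β ^ q := by
    refine ENNReal.rpow_le_rpow_of_exponent_le hβ1 ?_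
    rw [mul_div_assoc', div_le_iff₀ ha0]
    nlinarith
  have hqa1 : 1 ≤ q / a := by rw [le_div_iff₀ ha0]; linarith
  -- the excess power of `H` is absorbed by the bound `M`
  have hHq : H ^ (q / a) ≤ M ^ q * H := by
    have e2 : H ^ (q / a) = H ^ (q / a - 1) * H := by
      conv_lhs => rw [show q / a = (q / a - 1) + 1 by ring]
      rw [ENNReal.rpow_add_of_nonneg _ _ (by linarith) zero_le_one, ENNReal.rpow_one]
    rw [e2]
    gcongr
    refine (ENNReal.rpow_le_rpow hHM (by linarith)).trans
      (ENNReal.rpow_le_rpow_of_exponent_le hM1 ?_)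
    have : q / a ≤ q := div_le_self hq0.le ha
    linarith
  -- the total exponent of `t` is `-N - N (q / a - 1)`
  have hττ : τ ^ (-(N : ℝ) * q) * τ ^ (N * (a - 1) * (q / a)) ≤ τ ^ (-(N : ℝ) - 1 / 2) := by
    rw [← ENNReal.rpow_add _ _ hτ0 hτt]
    refine ENNReal.rpow_le_rpow_of_exponent_ge hτ1 ?_
    have : -(N : ℝ) * q + N * (a - 1) * (q / a) = -(N * (q / a - 1)) - N := by
      field_simp; ring
    linarith
  calc coneAvg g c r t x ^ q = τ ^ (-(N : ℝ) * q) * (∫⁻ y in b, g y) ^ q := by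
        rw [coneAvg, e0, ENNReal.mul_rpow_of_nonneg _ _ hq0.le, ← ENNReal.rpow_mul]
    _ ≤ τ ^ (-(N : ℝ) * q) * (τ ^ (N * (a - 1) * (q / a)) * β ^ q * (M ^ q * H)) := by
        refine mul_le_mul' le_rfl (hIq.trans ?_)
        gcongr
    _ = (τ ^ (-(N : ℝ) * q) * τ ^ (N * (a - 1) * (q / a))) * (β ^ q * M ^ q) * H := by ring
    _ ≤ τ ^ (-(N : ℝ) - 1 / 2) * (β ^ q * M ^ q) * H := by gcongr
    _ = _ := by rw [ENNReal.mul_rpow_of_nonneg _ _ hq0.le]; ring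

lemma lintegral_rpow_neg_half {ε : ℝ} (hε : 0 < ε) :
    ∫⁻ t in Ioc 0 ε, ENNReal.ofReal t ^ (-(1 / 2) : ℝ) = ENNReal.ofReal (2 * √ε) := by
  have hi : IntervalIntegrable (fun t : ℝ => t ^ (-(1 / 2) : ℝ)) volume 0 ε :=
    intervalIntegral.intervalIntegrable_rpow' (by norm_num)
  have h1 : ∫ t in (0 : ℝ)..ε, t ^ (-(1 / 2) : ℝ) = 2 * √ε := by
    rw [integral_rpow (Or.inl (by norm_num)), Real.sqrt_eq_rpow]
    norm_num
    ring
  rw [← h1, intervalIntegral.integral_of_le hε.le, ofReal_integral_eq_lintegral_ofReal]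
  · refine setLIntegral_congr_fun measurableSet_Ioc fun t ht => ?_
    exact ENNReal.ofReal_rpow_of_pos ht.1
  · exact (intervalIntegrable_iff_integrableOn_Ioc_of_le hε.le).1 hi
  · refine (ae_restrict_mem measurableSet_Ioc).mono fun t ht => ?_
    exact Real.rpow_nonneg ht.1.le _

/-- A majorant of the `p(x)`-th power of the error of the cone average at scale `ε`. -/
def errMajorant {N : ℕ} (g : Euc N → ℝ≥0∞) (c : Euc N) (r a ε : ℝ) (x : Euc N) : ℝ≥0∞ :=
  ∫⁻ t in Ioc 0 ε, ENNReal.ofReal t ^ (-(N : ℝ) - 1 / 2) * slice (fun y => g y ^ a) c r t x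

lemma measurable_errMajorant_aux {N : ℕ} {g : Euc N → ℝ≥0∞} (hg : Measurable g) (c : Euc N)
    (r a : ℝ) : Measurable (fun z : ℝ × Euc N =>
      ENNReal.ofReal z.1 ^ (-(N : ℝ) - 1 / 2) * slice (fun y => g y ^ a) c r z.1 z.2) := by
  have h1 := measurable_slice (hg.pow_const a) c r
  have h2 : Measurable (fun z : ℝ × Euc N => ENNReal.ofReal z.1 ^ (-(N : ℝ) - 1 / 2)) := by
    fun_prop
  exact h2.mul h1

lemma measurable_errMajorant {N : ℕ} {g : Euc N → ℝ≥0∞} (hg : Measurable g) (c : Euc N)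
    (r a ε : ℝ) : Measurable (errMajorant g c r a ε) :=
  (measurable_errMajorant_aux hg c r a).lintegral_prod_left'

/-- The weight `t^(-N-1/2)` against the volume `t^N` of the ball leaves the integrable factor
`t^(-1/2)`, whence the `√ε`. -/
lemma lintegral_errMajorant {N : ℕ} {g : Euc N → ℝ≥0∞} (hg : Measurable g) (c : Euc N)
    {r a ε : ℝ} (hr : 0 < r) (hε : 0 < ε) :
    ∫⁻ x, errMajorant g c r a ε x = volume (Metric.closedBall (0 : Euc N) r) *
      (∫⁻ y, g y ^ a) * ENNReal.ofReal (2 * √ε) := by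
  unfold errMajorant
  have haux := measurable_errMajorant_aux hg c r a
  rw [lintegral_lintegral_swap]
  · rw [← lintegral_rpow_neg_half hε, ← lintegral_const_mul _ (by fun_prop)]
    refine setLIntegral_congr_fun measurableSet_Ioc fun t ht => ?_
    have ht0 : ENNReal.ofReal t ≠ 0 := by simpa using ht.1
    have hm := measurable_slice_right (hg.pow_const a) c r t
    rw [lintegral_const_mul _ hm, lintegral_slice (hg.pow_const a) c hr ht.1]
    have : ENNReal.ofReal t ^ (-(1 / 2) : ℝ) =
        ENNReal.ofReal t ^ (-(N : ℝ) - 1 / 2) * ENNReal.ofReal t ^ (N : ℝ) := by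
      rw [← ENNReal.rpow_add _ _ ht0 ENNReal.ofReal_ne_top]; congr 1; ring
    rw [this]; ring
  · exact (haux.comp (measurable_swap)).aemeasurable

/-- Jensen in the scale `t ∈ (0, ε]`, followed by the estimate at each fixed scale. -/
lemma lintegral_coneAvg_rpow_le {N : ℕ} {g : Euc N → ℝ≥0∞} (hg : Measurable g) (c : Euc N)
    {r ε : ℝ} (hr : 0 < r) (hε1 : ε ≤ 1) {a q : ℝ} (ha : 1 ≤ a)
    (haq : a ≤ q) (hq : N * (q / a - 1) ≤ 1 / 2) {β M : ℝ≥0∞} (hβ1 : 1 ≤ β)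
    (hβ : volume (Metric.closedBall (0 : Euc N) r) ≤ β) (hM1 : 1 ≤ M)
    (hM : ∫⁻ y, g y ^ a ≤ M) {K : ℝ≥0∞} (x : Euc N) :
    (∫⁻ t in Ioc 0 ε, K * coneAvg g c r t x) ^ q ≤ (K * (β * M)) ^ q * errMajorant g c r a ε x := by
  have hq1 : 1 ≤ q := ha.trans haq
  have hcm : Measurable (fun t => coneAvg g c r t x) := by
    have h1 : Measurable (fun t => slice g c r t x) := measurable_slice_left hg c r x
    exact Measurable.mul (by fun_prop) h1
  have hq0 : 0 ≤ q := by linarith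
  calc (∫⁻ t in Ioc 0 ε, K * coneAvg g c r t x) ^ q
      ≤ (volume.restrict (Ioc 0 ε)) univ ^ (q - 1) *
          ∫⁻ t in Ioc 0 ε, (K * coneAvg g c r t x) ^ q :=
        lintegral_rpow_le_measure_mul _ (hcm.const_mul K).aemeasurable hq1
    _ ≤ 1 * ∫⁻ t in Ioc 0 ε, (K * coneAvg g c r t x) ^ q := by
        gcongr
        refine ENNReal.rpow_le_one ?_ (by linarith)
        rw [Measure.restrict_apply_univ, Real.volume_Ioc, sub_zero, ← ENNReal.ofReal_one]
        exact ENNReal.ofReal_le_ofReal hε1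
    _ ≤ ∫⁻ t in Ioc 0 ε, (K * (β * M)) ^ q *
          (ENNReal.ofReal t ^ (-(N : ℝ) - 1 / 2) * slice (fun y => g y ^ a) c r t x) := by
        rw [one_mul]
        refine setLIntegral_mono' measurableSet_Ioc fun t ht => ?_
        rw [ENNReal.mul_rpow_of_nonneg _ _ hq0, ENNReal.mul_rpow_of_nonneg K _ hq0, mul_assoc]
        gcongr
        exact coneAvg_rpow_le hg c hr ht.1 (ht.2.trans hε1) ha haq hq hβ1 hβ hM1 hM x
    _ = _ := by
        rw [lintegral_const_mul, errMajorant]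
        have hm := measurable_slice_left (hg.pow_const a) c r x
        exact Measurable.mul (by fun_prop) hm

/-! ### Local approximation in the modular -/

lemma enorm_le_sum_enorm {d : ℕ} (v : Euc d) : ‖v‖ₑ ≤ ∑ i, ‖v i‖ₑ := by
  have h : v = ∑ i, v i • (EuclideanSpace.single i (1 : ℝ) : Euc d) := by
    ext j
    simp [Finset.sum_apply, Pi.single_apply]
  conv_lhs => rw [h]
  refine (enorm_sum_le _ _).trans (Finset.sum_le_sum fun i _ => ?_)
  rw [enorm_smul]
  simp [enorm_eq_nnnorm]

lemma integrable_kernel_smul {N d : ℕ} {Ω : Set (Euc N)} {k : Euc N → ℝ} {B : ℝ}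
    (hk : Continuous k) (hB : ∀ y, |k y| ≤ B) {u : Euc N → Euc d} (hu : IntegrableOn u Ω) :
    Integrable (fun y => k y • u y) (volume.restrict Ω) :=
  Integrable.bdd_smul hu B hk.aestronglyMeasurable (Eventually.of_forall hB)

lemma integral_smul_apply {N d : ℕ} {Ω : Set (Euc N)} {k : Euc N → ℝ} {u : Euc N → Euc d}
    (h : Integrable (fun y => k y • u y) (volume.restrict Ω)) (i : Fin d) :
    (∫ y in Ω, k y • u y) i = ∫ y in Ω, k y * u y i := by
  have := (EuclideanSpace.proj i : Euc d →L[ℝ] ℝ).integral_comp_comm h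
  simpa using this.symm

lemma abs_le_mnorm {d n : ℕ} (ξ : Mat d n) (i : Fin d) (j : Fin n) : |ξ i j| ≤ mnorm ξ := by
  rw [mnorm]
  refine Real.abs_le_sqrt ?_
  calc (ξ i j) ^ 2 ≤ ∑ j, (ξ i j) ^ 2 :=
        Finset.single_le_sum (f := fun j => (ξ i j) ^ 2) (fun _ _ => sq_nonneg _)
          (Finset.mem_univ j)
    _ ≤ _ := Finset.single_le_sum (f := fun i => ∑ j, (ξ i j) ^ 2)
          (fun _ _ => Finset.sum_nonneg fun _ _ => sq_nonneg _) (Finset.mem_univ i)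

lemma mnorm_nonneg {d n : ℕ} (ξ : Mat d n) : 0 ≤ mnorm ξ := Real.sqrt_nonneg _

lemma measurable_mnorm {α : Type*} [MeasurableSpace α] {d n : ℕ} {G : α → Mat d n}
    (hG : ∀ i j, Measurable fun x => G x i j) : Measurable fun x => mnorm (G x) := by
  unfold mnorm
  exact (Finset.measurable_sum _ fun i _ => Finset.measurable_sum _ fun j _ =>
    (hG i j).pow_const 2).sqrt

/-- Quantitative local approximation: on `W` the error of the cone average at scale `ε` is
controlled, in the modular, by the square root of `ε` times a constant depending on a bound `M` for
the modular of the gradient. The lower bound `a` of the exponent on `S` drives the estimate. -/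
lemma exists_majorant {N d : ℕ} {Ω S W : Set (Euc N)} (hΩ : MeasurableSet Ω)
    (hSm : MeasurableSet S) (hSΩ : S ⊆ Ω) (hWS : W ⊆ S) {ρ : Euc N → ℝ} {c : Euc N} {r B ε : ℝ}
    (hr : 0 < r) (hρ : ContDiff ℝ (⊤ : ℕ∞) ρ) (hs : tsupport ρ ⊆ Metric.closedBall c r)
    (hB : ∀ w, |ρ w| ≤ B) (h1 : ∫ w, ρ w = 1) (hε : 0 < ε) (hε1 : ε ≤ 1)
    (hW : ∀ x ∈ W, ∀ t, 0 < t → t ≤ ε → Metric.closedBall (x + t • c) (t * r) ⊆ S)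
    {p : Euc N → ℝ} {a P : ℝ} (ha : 1 ≤ a) (hap : ∀ y ∈ S, a ≤ p y)
    (hpq : ∀ y ∈ S, N * (p y / a - 1) ≤ 1 / 2) (hP : ∀ y ∈ S, p y ≤ P)
    {β M K : ℝ≥0∞} (hβ1 : 1 ≤ β) (hβ : volume (Metric.closedBall (0 : Euc N) r) ≤ β)
    (hM1 : 1 ≤ M) (hK1 : 1 ≤ K) (hK : d * ENNReal.ofReal (N * ((‖c‖ + r) * B)) ≤ K)
    {u : Euc N → Euc d} {G : Euc N → Mat d N} (hu : IntegrableOn u Ω)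
    (hG : ∀ i j, AEMeasurable (fun x => G x i j) (volume.restrict Ω))
    (hw : IsWeakGrad Ω u G) (hM : volume Ω + emod Ω p (fun x => mnorm (G x)) ≤ M) :
    ∃ Q : Euc N → ℝ≥0∞, Measurable Q ∧
      ∫⁻ x, Q x ≤ (K * (β * M)) ^ P * (β * M * ENNReal.ofReal (2 * √ε)) ∧
      ∀ᵐ x, x ∈ W → ‖u x - ∫ y in Ω, mollKer ρ ε x y • u y‖ₑ ^ p x ≤ Q x := by
  -- a Borel measurable representative of the gradient
  set G' : Euc N → Mat d N := fun x i j => (hG i j).mk _ x with hG'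
  have hG'm : ∀ i j, Measurable fun x => G' x i j := fun i j => (hG i j).measurable_mk
  have hGG : ∀ᵐ x ∂(volume.restrict Ω), G x = G' x := by
    have : ∀ᵐ x ∂(volume.restrict Ω), ∀ i j, G x i j = G' x i j :=
      ae_all_iff.2 fun i => ae_all_iff.2 fun j => (hG i j).ae_eq_mk
    filter_upwards [this] with x hx
    ext i j; exact hx i j
  set g : Euc N → ℝ≥0∞ := S.indicator fun y => ENNReal.ofReal (mnorm (G' y)) with hg
  have hgm : Measurable g := (measurable_mnorm hG'm).ennreal_ofReal.indicator hSm
  -- since `a ≤ p` on `S`, `s ^ a ≤ 1 + s ^ p y`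
  have hgM : ∫⁻ y, g y ^ a ≤ M := by
    refine le_trans ?_ hM
    have e1 : volume Ω + emod Ω p (fun x => mnorm (G x)) =
        ∫⁻ y in Ω, (1 + ENNReal.ofReal (mnorm (G' y) ^ p y)) := by
      rw [lintegral_add_left measurable_const, setLIntegral_one, emod]
      congr 1
      refine lintegral_congr_ae ?_
      filter_upwards [hGG] with x hx
      rw [hx]
    rw [e1, ← lintegral_indicator hΩ]
    refine lintegral_mono fun y => ?_
    by_cases hy : y ∈ S
    · rw [hg, indicator_of_mem hy, indicator_of_mem (hSΩ hy),
        ENNReal.ofReal_rpow_of_nonneg (mnorm_nonneg _) (by linarith), ← ENNReal.ofReal_one,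
        ← ENNReal.ofReal_add zero_le_one (Real.rpow_nonneg (mnorm_nonneg _) _)]
      refine ENNReal.ofReal_le_ofReal ?_
      rcases le_total (mnorm (G' y)) 1 with h | h
      · have h2 := Real.rpow_le_one (mnorm_nonneg (G' y)) h (by linarith : 0 ≤ a)
        have h3 := Real.rpow_nonneg (mnorm_nonneg (G' y)) (p y)
        linarith
      · have h2 := Real.rpow_le_rpow_of_exponent_le h (hap y hy)
        linarith
    · rw [hg, indicator_of_notMem hy, ENNReal.zero_rpow_of_pos (by linarith)]
      exact zero_le
  refine ⟨fun x => (K * (β * M)) ^ P * errMajorant g c r a ε x,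
    (measurable_errMajorant hgm c r a ε).const_mul _, ?_, ?_⟩
  · rw [lintegral_const_mul _ (measurable_errMajorant hgm c r a ε),
      lintegral_errMajorant hgm c hr hε]
    gcongr
  have hcomp : ∀ᵐ x, ∀ i : Fin d, x ∈ Ω →
      (∀ t, 0 < t → t ≤ ε → Metric.closedBall (x + t • c) (t * r) ⊆ S) →
      ‖u x i - ∫ y in Ω, mollKer ρ ε x y * u y i‖ₑ ≤
        ∫⁻ t in Ioc 0 ε, ENNReal.ofReal (N * ((‖c‖ + r) * B)) * coneAvg g c r t x := by
    refine ae_all_iff.2 fun i => ?_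
    have hui : IntegrableOn (fun x => u x i) Ω :=
      (EuclideanSpace.proj i : Euc d →L[ℝ] ℝ).integrable_comp hu
    refine ae_enorm_sub_le (F := fun y => G' y i) hΩ hr hρ hs hB h1 hSΩ hui ?_ ?_ hε
    · intro φ h1 h2 h3 j
      rw [← hw φ h1 h2 h3 i j]
      refine integral_congr_ae ?_
      filter_upwards [hGG] with x hx
      rw [hx]
    · intro y hy j
      rw [hg, indicator_of_mem hy, Real.enorm_eq_ofReal_abs]
      exact ENNReal.ofReal_le_ofReal (abs_le_mnorm _ _ _)
  filter_upwards [hcomp] with x hx hxW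
  have hxS := hWS hxW
  have hint : Integrable (fun y => mollKer ρ ε x y • u y) (volume.restrict Ω) :=
    integrable_kernel_smul ((continuous_mollKer hρ.continuous ε).comp
      (Continuous.prodMk_right x)) (fun y => abs_mollKer_le hB hε x y) hu
  have hnorm : ‖u x - ∫ y in Ω, mollKer ρ ε x y • u y‖ₑ ≤
      ∫⁻ t in Ioc 0 ε, K * coneAvg g c r t x := by
    have hcm : Measurable (fun t => coneAvg g c r t x) := by
      have h1 : Measurable (fun t => slice g c r t x) := measurable_slice_left hgm c r x
      exact Measurable.mul (by fun_prop) h1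
    calc ‖u x - ∫ y in Ω, mollKer ρ ε x y • u y‖ₑ
        ≤ ∑ i, ‖(u x - ∫ y in Ω, mollKer ρ ε x y • u y) i‖ₑ := enorm_le_sum_enorm _
      _ ≤ ∑ _i : Fin d, ∫⁻ t in Ioc 0 ε,
            ENNReal.ofReal (N * ((‖c‖ + r) * B)) * coneAvg g c r t x := by
          refine Finset.sum_le_sum fun i _ => ?_
          rw [PiLp.sub_apply, integral_smul_apply hint]
          exact hx i (hSΩ hxS) (hW x hxW)
      _ = d * ENNReal.ofReal (N * ((‖c‖ + r) * B)) * ∫⁻ t in Ioc 0 ε, coneAvg g c r t x := by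
          rw [Finset.sum_const, Finset.card_univ, Fintype.card_fin, nsmul_eq_mul,
            lintegral_const_mul _ hcm, mul_assoc]
      _ ≤ K * ∫⁻ t in Ioc 0 ε, coneAvg g c r t x := by gcongr
      _ = _ := by rw [lintegral_const_mul _ hcm]
  have hp1 : 1 ≤ p x := ha.trans (hap x hxS)
  calc ‖u x - ∫ y in Ω, mollKer ρ ε x y • u y‖ₑ ^ p x
      ≤ (∫⁻ t in Ioc 0 ε, K * coneAvg g c r t x) ^ p x :=
        ENNReal.rpow_le_rpow hnorm (by linarith)
    _ ≤ (K * (β * M)) ^ p x * errMajorant g c r a ε x :=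
        lintegral_coneAvg_rpow_le hgm c hr hε1 ha (hap x hxS) (hpq x hxS) hβ1 hβ hM1 hgM x
    _ ≤ _ := by
        gcongr
        · exact one_le_mul hK1 (one_le_mul hβ1 hM1)
        · exact hP x hxS

/-! ### Approximation by integral operators near a point -/

/-- The functions `u ∈ L¹(Ω;ℝ^d)` with a weak gradient `G` whose modular is at most `M`. -/
def GradBdd {N d : ℕ} (Ω : Set (Euc N)) (p : Euc N → ℝ) (M : ℝ≥0∞) (u : Euc N → Euc d)
    (G : Euc N → Mat d N) : Prop :=
  IntegrableOn u Ω ∧ (∀ i j, AEMeasurable (fun x => G x i j) (volume.restrict Ω)) ∧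
    IsWeakGrad Ω u G ∧ emod Ω p (fun x => mnorm (G x)) ≤ M

/-- On `V`, all functions with a given bound on the modular of the gradient are approximated
in the modular, uniformly and to any accuracy, by integral operators with bounded continuous
kernels. -/
def HasKernelApprox {N : ℕ} (d : ℕ) (Ω : Set (Euc N)) (p : Euc N → ℝ) (V : Set (Euc N)) : Prop :=
  ∀ M η : ℝ≥0∞, M ≠ ⊤ → η ≠ 0 → ∃ (Φ : Euc N → Euc N → ℝ) (B : ℝ),
    Continuous (fun z : Euc N × Euc N => Φ z.1 z.2) ∧ (∀ x y, |Φ x y| ≤ B) ∧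
    ∀ (u : Euc N → Euc d) (G : Euc N → Mat d N), GradBdd Ω p M u G →
      ∃ Q : Euc N → ℝ≥0∞, Measurable Q ∧ ∫⁻ x, Q x ≤ η ∧
        ∀ᵐ x, x ∈ Ω ∩ V → ‖u x - ∫ y in Ω, Φ x y • u y‖ₑ ^ p x ≤ Q x

/-- A smooth mollifier supported in a prescribed ball. -/
lemma exists_mollifier {N : ℕ} (c : Euc N) {r : ℝ} (hr : 0 < r) :
    ∃ ρ : Euc N → ℝ, ContDiff ℝ (⊤ : ℕ∞) ρ ∧ tsupport ρ ⊆ Metric.closedBall c r ∧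
      ∫ w, ρ w = 1 := by
  let b : ContDiffBump c := ⟨r / 2, r, by positivity, by linarith⟩
  refine ⟨b.normed volume, b.contDiff_normed, ?_, b.integral_normed⟩
  rw [b.tsupport_normed_eq]

/-- Near `x₀` the exponent oscillates so little that the local lower bound `a` of `p` controls, with
a gain of integrability, all powers `p x`; a small scale then makes the error arbitrarily small. -/
lemma exists_hasKernelApprox {N : ℕ} (d : ℕ) {Ω : Set (Euc N)} (hΩ : IsOpen Ω)
    (hΩb : Bornology.IsBounded Ω) (hL : HasLipschitzBoundary Ω) {p : Euc N → ℝ}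
    (hp : ContinuousOn p (closure Ω)) (hp1 : ∀ x ∈ closure Ω, 1 ≤ p x) {P : ℝ}
    (hP : ∀ x ∈ closure Ω, p x ≤ P) {x₀ : Euc N} (hx₀ : x₀ ∈ closure Ω) :
    ∃ V, IsOpen V ∧ x₀ ∈ V ∧ HasKernelApprox d Ω p V := by
  obtain ⟨c, r, δ, hr, hδ, hcone⟩ := exists_cone hΩ hL hx₀
  -- `σ` bounds the oscillation of `p`; it is small enough that `N * (p y / a - 1) ≤ 1 / 2`.
  set σ : ℝ := 1 / (4 * (N + 1)) with hσ
  have hσ0 : 0 < σ := by positivity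
  have hσN : N * (2 * σ) ≤ 1 / 2 := by
    rw [hσ]
    have : (0 : ℝ) ≤ N := Nat.cast_nonneg N
    field_simp
    linarith
  obtain ⟨R₀, hR₀, hpR⟩ := Metric.continuousWithinAt_iff.1 (hp x₀ hx₀) σ hσ0
  set R := min R₀ δ with hR
  have hR0 : 0 < R := lt_min hR₀ hδ
  set a := max 1 (p x₀ - σ) with ha
  have ha1 : 1 ≤ a := le_max_left _ _
  set S := Ω ∩ Metric.ball x₀ R with hS
  have hosc : ∀ y ∈ S, a ≤ p y ∧ p y - a ≤ 2 * σ := by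
    intro y hy
    have hyc : y ∈ closure Ω := subset_closure hy.1
    have h1 := hpR hyc ((Metric.mem_ball.1 hy.2).trans_le (min_le_left _ _))
    rw [Real.dist_eq, abs_lt] at h1
    have h2 : p x₀ - σ ≤ a := le_max_right _ _
    exact ⟨max_le (hp1 y hyc) (by linarith), by linarith⟩
  refine ⟨Metric.ball x₀ (R / 2), Metric.isOpen_ball, Metric.mem_ball_self (by positivity), ?_⟩
  intro M η hM hη
  obtain ⟨ρ, hρ, hs, hρ1⟩ := exists_mollifier c hr
  obtain ⟨B, hB0, hB, -⟩ := exists_bound_of_tsupport hρ hs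
  set β := max 1 (volume (Metric.closedBall (0 : Euc N) r)) with hβ
  set K := max 1 (d * ENNReal.ofReal (N * ((‖c‖ + r) * B))) with hK
  set M₁ := max 1 (volume Ω + M) with hM₁
  have hβt : β ≠ ⊤ := by simp [hβ, measure_closedBall_lt_top.ne]
  have hKt : K ≠ ⊤ := by simp [hK, ENNReal.mul_ne_top]
  have hM₁t : M₁ ≠ ⊤ := by simp [hM₁, hM, hΩb.measure_lt_top.ne]
  have hP0 : 0 ≤ P := by linarith [hp1 x₀ hx₀, hP x₀ hx₀]
  have hC : (K * (β * M₁)) ^ P * (β * M₁) ≠ ⊤ :=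
    ENNReal.mul_ne_top (ENNReal.rpow_ne_top_of_nonneg hP0
      (ENNReal.mul_ne_top hKt (ENNReal.mul_ne_top hβt hM₁t))) (ENNReal.mul_ne_top hβt hM₁t)
  have hlim : Tendsto (fun ε : ℝ => (K * (β * M₁)) ^ P * (β * M₁) * ENNReal.ofReal (2 * √ε))
      (𝓝[>] 0) (𝓝 0) := by
    have h1 : Tendsto (fun ε : ℝ => ENNReal.ofReal (2 * √ε)) (𝓝 0) (𝓝 0) := by
      have : Continuous (fun ε : ℝ => ENNReal.ofReal (2 * √ε)) :=
        ENNReal.continuous_ofReal.comp (by fun_prop)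
      simpa using this.tendsto 0
    have h2 := ENNReal.Tendsto.const_mul (h1.mono_left nhdsWithin_le_nhds) (Or.inr hC)
      (b := 0) (f := 𝓝[>] (0 : ℝ))
    simpa using h2
  have hcr : 0 < ‖c‖ + r := by positivity
  have hev : ∀ᶠ ε in 𝓝[>] (0 : ℝ), (0 < ε ∧ ε ≤ min 1 (min δ (R / 2 / (‖c‖ + r)))) ∧
      (K * (β * M₁)) ^ P * (β * M₁) * ENNReal.ofReal (2 * √ε) ≤ η := by
    have h0 : 0 < min 1 (min δ (R / 2 / (‖c‖ + r))) := by positivity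
    exact Filter.Eventually.and (Ioc_mem_nhdsGT h0) (hlim.eventually_le_const (pos_iff_ne_zero.2 hη))
  obtain ⟨ε, ⟨hε, hε'⟩, hεη⟩ := hev.exists
  have hε1 : ε ≤ 1 := hε'.trans (min_le_left _ _)
  have hεδ : ε ≤ δ := hε'.trans ((min_le_right _ _).trans (min_le_left _ _))
  have hεR : ε * (‖c‖ + r) ≤ R / 2 :=
    (le_div_iff₀ hcr).1 (hε'.trans ((min_le_right _ _).trans (min_le_right _ _)))
  refine ⟨mollKer ρ ε, (ε ^ N)⁻¹ * B, continuous_mollKer hρ.continuous ε,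
    abs_mollKer_le hB hε, fun u G ⟨hu, hG, hw, hGM⟩ => ?_⟩
  -- balls of directions with vertex in the half ball stay in `S`, by the cone condition and the
  -- choice of `ε`
  have hW : ∀ x ∈ Ω ∩ Metric.ball x₀ (R / 2), ∀ t, 0 < t → t ≤ ε →
      Metric.closedBall (x + t • c) (t * r) ⊆ S := by
    intro x hx t ht htε y hy
    obtain ⟨w, hw, rfl⟩ : ∃ w ∈ Metric.closedBall c r, y = x + t • w := by
      refine ⟨t⁻¹ • (y - x), ?_, ?_⟩
      · rw [Metric.mem_closedBall, dist_eq_norm] at hy ⊢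
        have e : y - (x + t • c) = t • (t⁻¹ • (y - x) - c) := by
          rw [smul_sub, smul_inv_smul₀ ht.ne']; abel
        rw [e, norm_smul, Real.norm_of_nonneg ht.le] at hy
        exact le_of_mul_le_mul_left hy ht
      · rw [smul_inv_smul₀ ht.ne']; abel
    have hxd : dist x x₀ < R / 2 := hx.2
    refine ⟨hcone x hx.1 ?_ t ht (htε.trans hεδ) w hw, ?_⟩
    · linarith [min_le_right R₀ δ]
    · rw [Metric.mem_ball]
      have h1 : dist (x + t • w) x ≤ R / 2 := by
        rw [dist_eq_norm, add_sub_cancel_left, norm_smul, Real.norm_of_nonneg ht.le]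
        rw [Metric.mem_closedBall, dist_eq_norm] at hw
        have h2 := norm_le_norm_add_norm_sub' w c
        calc t * ‖w‖ ≤ ε * (‖c‖ + r) := by gcongr; linarith
          _ ≤ R / 2 := hεR
      linarith [dist_triangle (x + t • w) x x₀]
  obtain ⟨Q, hQm, hQ, hQx⟩ := exists_majorant (K := K) (β := β) (M := M₁) (P := P)
    hΩ.measurableSet (hΩ.inter Metric.isOpen_ball).measurableSet (inter_subset_left)
    (inter_subset_inter_right Ω (Metric.ball_subset_ball (by linarith)))
    hr hρ hs hB hρ1 hε hε1 hW ha1 (fun y hy => (hosc y hy).1) (fun y hy => by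
      have h1 := hosc y hy
      have h2 : p y / a - 1 ≤ 2 * σ := by
        rw [sub_le_iff_le_add, div_le_iff₀ (by linarith)]
        nlinarith
      calc N * (p y / a - 1) ≤ N * (2 * σ) := by gcongr
        _ ≤ 1 / 2 := hσN) (fun y hy => hP y (subset_closure hy.1)) (le_max_left _ _)
    (le_max_right _ _) (le_max_left _ _) (le_max_left _ _) (le_max_right _ _) hu hG hw
    ((add_le_add_right hGM _).trans (le_max_right _ _))
  refine ⟨Q, hQm, hQ.trans (le_trans (le_of_eq ?_) hεη), hQx⟩
  ring

/-! ### Consequences of the kernel approximation -/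

lemma rpow_add_le_two {q P : ℝ} (hq : 1 ≤ q) (hqP : q ≤ P) (a b : ℝ≥0∞) :
    (a + b) ^ q ≤ 2 ^ P * (a ^ q + b ^ q) := by
  refine (ENNReal.rpow_add_le_mul_rpow_add_rpow a b hq).trans ?_
  gcongr
  · norm_num
  · linarith

lemma rpow_add_le_three {q P : ℝ} (hq : 1 ≤ q) (hqP : q ≤ P) (a b c : ℝ≥0∞) :
    (a + b + c) ^ q ≤ 2 ^ P * 2 ^ P * (a ^ q + b ^ q + c ^ q) := by
  have h2 : (1 : ℝ≥0∞) ≤ 2 ^ P := ENNReal.one_le_rpow (by norm_num) (by linarith)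
  calc (a + b + c) ^ q ≤ 2 ^ P * ((a + b) ^ q + c ^ q) := rpow_add_le_two hq hqP _ _
    _ ≤ 2 ^ P * (2 ^ P * (a ^ q + b ^ q) + 2 ^ P * c ^ q) := by
        gcongr
        · exact rpow_add_le_two hq hqP _ _
        · exact le_mul_of_one_le_left zero_le h2
    _ = _ := by ring

lemma enorm_kernel_integral_le {N d : ℕ} {Ω : Set (Euc N)} (hΩ : MeasurableSet Ω)
    {k : Euc N → ℝ} {B : ℝ} (hB : ∀ y ∈ Ω, |k y| ≤ B) {u : Euc N → Euc d} {L : ℝ≥0∞}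
    (hu : ∫⁻ y in Ω, ‖u y‖ₑ ≤ L) : ‖∫ y in Ω, k y • u y‖ₑ ≤ ENNReal.ofReal B * L := by
  calc ‖∫ y in Ω, k y • u y‖ₑ ≤ ∫⁻ y in Ω, ‖k y • u y‖ₑ := enorm_integral_le_lintegral_enorm _
    _ ≤ ∫⁻ y in Ω, ENNReal.ofReal B * ‖u y‖ₑ := by
        refine setLIntegral_mono' hΩ fun y hy => ?_
        rw [enorm_smul, Real.enorm_eq_ofReal_abs]
        gcongr
        exact hB y hy
    _ = ENNReal.ofReal B * ∫⁻ y in Ω, ‖u y‖ₑ := lintegral_const_mul' _ _ ENNReal.ofReal_ne_top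
    _ ≤ _ := by gcongr

lemma continuous_kernel_integral {N d : ℕ} {Ω : Set (Euc N)} {Φ : Euc N → Euc N → ℝ} {B : ℝ}
    (hΦ : Continuous (fun z : Euc N × Euc N => Φ z.1 z.2)) (hB : ∀ x y, |Φ x y| ≤ B)
    {u : Euc N → Euc d} (hu : IntegrableOn u Ω) :
    Continuous fun x => ∫ y in Ω, Φ x y • u y := by
  refine continuous_of_dominated (bound := fun y => B * ‖u y‖) ?_ ?_ (hu.norm.const_mul B) ?_
  · intro x
    exact (integrable_kernel_smul (hΦ.comp (Continuous.prodMk_right x)) (hB x) hu).1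
  · intro x
    refine Eventually.of_forall fun y => ?_
    rw [norm_smul]
    gcongr
    exact hB x y
  · refine Eventually.of_forall fun y => ?_
    exact (hΦ.comp (Continuous.prodMk_left y)).smul continuous_const

/-- A bound in `L¹` together with a bound on the modular of the gradient bounds the modular of the
function: locally the function is a small error plus a bounded cone average. -/
lemma exists_modular_bound {N d : ℕ} {Ω : Set (Euc N)} (hΩ : IsOpen Ω)
    (hΩb : Bornology.IsBounded Ω) {p : Euc N → ℝ} {P : ℝ} (hp1 : ∀ x ∈ closure Ω, 1 ≤ p x)
    (hP : ∀ x ∈ closure Ω, p x ≤ P)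
    (hloc : ∀ x₀ ∈ closure Ω, ∃ V, IsOpen V ∧ x₀ ∈ V ∧ HasKernelApprox d Ω p V)
    {M L : ℝ≥0∞} (hM : M ≠ ⊤) (hL : L ≠ ⊤) :
    ∃ K : ℝ≥0∞, K ≠ ⊤ ∧ ∀ (u : Euc N → Euc d) (G : Euc N → Mat d N), GradBdd Ω p M u G →
      ∫⁻ x in Ω, ‖u x‖ₑ ≤ L → ∫⁻ x in Ω, ‖u x‖ₑ ^ p x ≤ K := by
  have hcpt : IsCompact (closure Ω) := hΩb.isCompact_closure
  -- the estimate is local, and finitely many of the sets `V` cover the closure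
  have key : ∃ K : ℝ≥0∞, K ≠ ⊤ ∧ ∀ (u : Euc N → Euc d) (G : Euc N → Mat d N), GradBdd Ω p M u G →
      ∫⁻ x in Ω, ‖u x‖ₑ ≤ L → ∫⁻ x in Ω ∩ closure Ω, ‖u x‖ₑ ^ p x ≤ K := by
    refine hcpt.induction_on (p := fun T => ∃ K : ℝ≥0∞, K ≠ ⊤ ∧
      ∀ (u : Euc N → Euc d) (G : Euc N → Mat d N), GradBdd Ω p M u G →
      ∫⁻ x in Ω, ‖u x‖ₑ ≤ L → ∫⁻ x in Ω ∩ T, ‖u x‖ₑ ^ p x ≤ K) ?_ ?_ ?_ ?_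
    · exact ⟨0, by simp, fun u G _ _ => by simp⟩
    · rintro s t hst ⟨K, hK, h⟩
      exact ⟨K, hK, fun u G hu huL =>
        (lintegral_mono_set (inter_subset_inter_right _ hst)).trans (h u G hu huL)⟩
    · rintro s t ⟨K, hK, h⟩ ⟨K', hK', h'⟩
      refine ⟨K + K', by simp [hK, hK'], fun u G hu huL => ?_⟩
      rw [inter_union_distrib_left]
      exact (lintegral_union_le _ _ _).trans (add_le_add (h u G hu huL) (h' u G hu huL))
    · intro x₀ hx₀
      obtain ⟨V, hV, hxV, hVa⟩ := hloc x₀ hx₀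
      refine ⟨V, mem_nhdsWithin_of_mem_nhds (hV.mem_nhds hxV), ?_⟩
      obtain ⟨Φ, B, hΦ, hB, h⟩ := hVa M 1 hM one_ne_zero
      set A : ℝ≥0∞ := max 1 (ENNReal.ofReal B * L) ^ P with hA
      have hP0 : 0 ≤ P := by linarith [hp1 x₀ hx₀, hP x₀ hx₀]
      have hAt : A ≠ ⊤ := ENNReal.rpow_ne_top_of_nonneg hP0 (by simp [ENNReal.mul_ne_top, hL])
      have h2t : (2 : ℝ≥0∞) ^ P ≠ ⊤ := ENNReal.rpow_ne_top_of_nonneg hP0 (by simp)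
      refine ⟨2 ^ P * (1 + A * volume Ω), ENNReal.mul_ne_top h2t (by
        simp [ENNReal.mul_ne_top, hAt, hΩb.measure_lt_top.ne]), fun u G hu huL => ?_⟩
      obtain ⟨Q, hQm, hQ, hQx⟩ := h u G hu
      have hm : MeasurableSet (Ω ∩ V) := (hΩ.inter hV).measurableSet
      calc ∫⁻ x in Ω ∩ V, ‖u x‖ₑ ^ p x
          ≤ ∫⁻ x in Ω ∩ V, 2 ^ P * (Q x + A) := by
            refine lintegral_mono_ae ((ae_restrict_iff' hm).2 ?_)
            filter_upwards [hQx] with x hx hxV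
            have hxc : x ∈ closure Ω := subset_closure hxV.1
            calc ‖u x‖ₑ ^ p x
                ≤ (‖u x - ∫ y in Ω, Φ x y • u y‖ₑ + ‖∫ y in Ω, Φ x y • u y‖ₑ) ^ p x := by
                  refine ENNReal.rpow_le_rpow ?_ (by linarith [hp1 x hxc])
                  conv_lhs => rw [← sub_add_cancel (u x) (∫ y in Ω, Φ x y • u y)]
                  exact enorm_add_le _ _
              _ ≤ 2 ^ P * (‖u x - ∫ y in Ω, Φ x y • u y‖ₑ ^ p x +
                    ‖∫ y in Ω, Φ x y • u y‖ₑ ^ p x) := rpow_add_le_two (hp1 x hxc) (hP x hxc) _ _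
              _ ≤ 2 ^ P * (Q x + A) := by
                  gcongr
                  · exact hx hxV
                  · refine (ENNReal.rpow_le_rpow ((enorm_kernel_integral_le hΩ.measurableSet
                      (fun y _ => hB x y) huL).trans (le_max_right 1 _))
                      (by linarith [hp1 x hxc])).trans ?_
                    exact ENNReal.rpow_le_rpow_of_exponent_le (le_max_left _ _) (hP x hxc)
        _ = 2 ^ P * ((∫⁻ x in Ω ∩ V, Q x) + A * volume (Ω ∩ V)) := by
            rw [lintegral_const_mul _ (by fun_prop), lintegral_add_left hQm, setLIntegral_const]
        _ ≤ 2 ^ P * (1 + A * volume Ω) := by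
            gcongr
            · exact (setLIntegral_le_lintegral _ _).trans hQ
            · exact inter_subset_left
  obtain ⟨K, hK, h⟩ := key
  refine ⟨K, hK, fun u G hu huL => ?_⟩
  have := h u G hu huL
  rwa [inter_eq_left.2 subset_closure] at this

/-- If a sequence bounded in `L¹`, with gradients bounded in the modular, converges against every
continuous kernel, then it is Cauchy in the modular. -/
lemma tendsto_modular_cauchy {N d : ℕ} {Ω : Set (Euc N)} (hΩ : IsOpen Ω)
    (hΩb : Bornology.IsBounded Ω) {p : Euc N → ℝ} {P : ℝ} (hp : ContinuousOn p (closure Ω))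
    (hp1 : ∀ x ∈ closure Ω, 1 ≤ p x) (hP : ∀ x ∈ closure Ω, p x ≤ P)
    (hloc : ∀ x₀ ∈ closure Ω, ∃ V, IsOpen V ∧ x₀ ∈ V ∧ HasKernelApprox d Ω p V)
    {M L : ℝ≥0∞} (hM : M ≠ ⊤) (hL : L ≠ ⊤) {u : ℕ → Euc N → Euc d} {G : ℕ → Euc N → Mat d N}
    (hu : ∀ k, GradBdd Ω p M (u k) (G k)) (huL : ∀ k, ∫⁻ x in Ω, ‖u k x‖ₑ ≤ L)
    (hconv : ∀ f : Euc N → ℝ, Continuous f → ∃ l, Tendsto (fun k => ∫ y in Ω, f y • u k y) atTop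
      (𝓝 l)) :
    Tendsto (fun z : ℕ × ℕ => ∫⁻ x in Ω, ‖u z.1 x - u z.2 x‖ₑ ^ p x) (atTop ×ˢ atTop) (𝓝 0) := by
  have hcpt : IsCompact (closure Ω) := hΩb.isCompact_closure
  have hpm : AEMeasurable p (volume.restrict Ω) :=
    (hp.mono subset_closure).aemeasurable hΩ.measurableSet
  -- Cauchy convergence is local, and finitely many of the sets `V` cover the closure
  have key : Tendsto (fun z : ℕ × ℕ => ∫⁻ x in Ω ∩ closure Ω, ‖u z.1 x - u z.2 x‖ₑ ^ p x)
      (atTop ×ˢ atTop) (𝓝 0) := by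
    refine hcpt.induction_on (p := fun T => Tendsto (fun z : ℕ × ℕ =>
      ∫⁻ x in Ω ∩ T, ‖u z.1 x - u z.2 x‖ₑ ^ p x) (atTop ×ˢ atTop) (𝓝 0)) ?_ ?_ ?_ ?_
    · simp
    · intro s t hst h
      exact tendsto_of_tendsto_of_tendsto_of_le_of_le tendsto_const_nhds h (fun _ => zero_le)
        (fun z => lintegral_mono_set (inter_subset_inter_right _ hst))
    · intro s t h h'
      have h2 := h.add h'
      rw [add_zero] at h2
      refine tendsto_of_tendsto_of_tendsto_of_le_of_le tendsto_const_nhds h2 (fun _ => zero_le)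
        (fun z => ?_)
      simp only
      rw [inter_union_distrib_left]
      exact lintegral_union_le _ _ _
    · intro x₀ hx₀
      obtain ⟨V, hV, hxV, hVa⟩ := hloc x₀ hx₀
      refine ⟨V, mem_nhdsWithin_of_mem_nhds (hV.mem_nhds hxV), ?_⟩
      have hP0 : 0 ≤ P := by linarith [hp1 x₀ hx₀, hP x₀ hx₀]
      set C : ℝ≥0∞ := 2 ^ P * 2 ^ P with hC
      have h2t : (2 : ℝ≥0∞) ^ P ≠ ⊤ := ENNReal.rpow_ne_top_of_nonneg hP0 (by simp)
      have hCt : C ≠ ⊤ := ENNReal.mul_ne_top h2t h2t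
      have hC0 : C ≠ 0 := by
        have : (1 : ℝ≥0∞) ≤ 2 ^ P := by
          rw [← ENNReal.rpow_zero (x := 2)]
          exact ENNReal.rpow_le_rpow_of_exponent_le (by norm_num) hP0
        exact (one_le_mul this this).trans_lt' one_pos |>.ne'
      rw [ENNReal.tendsto_nhds_zero]
      intro η hη
      by_cases hηt : η = ⊤
      · simp [hηt]
      -- a third of the budget for each of the two errors and for the kernel part
      set η' := η / (C * 3) with hη'
      have hη'0 : η' ≠ 0 := (ENNReal.div_pos hη.ne' (ENNReal.mul_ne_top hCt (by simp))).ne'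
      obtain ⟨Φ, B, hΦ, hB, h⟩ := hVa M η' hM hη'0
      set U : ℕ → Euc N → Euc d := fun k x => ∫ y in Ω, Φ x y • u k y with hU
      have hUc : ∀ k, Continuous (U k) := fun k => continuous_kernel_integral hΦ hB (hu k).1
      have hUB : ∀ k x, ‖U k x‖ₑ ≤ ENNReal.ofReal B * L := fun k x =>
        enorm_kernel_integral_le hΩ.measurableSet (fun y _ => hB x y) (huL k)
      set A : ℝ≥0∞ := max 1 (ENNReal.ofReal B * L + ENNReal.ofReal B * L) ^ P with hA
      have hAt : A ≠ ⊤ := ENNReal.rpow_ne_top_of_nonneg hP0 (by simp [ENNReal.mul_ne_top, hL])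
      -- dominated convergence: the kernel averages are bounded and Cauchy at every point
      have hUlim : Tendsto (fun z : ℕ × ℕ => ∫⁻ x in Ω, ‖U z.1 x - U z.2 x‖ₑ ^ p x)
          (atTop ×ˢ atTop) (𝓝 0) := by
        have hcongr : ∀ z : ℕ × ℕ, ∫⁻ x in Ω, ‖U z.1 x - U z.2 x‖ₑ ^ p x =
            ∫⁻ x in Ω, ‖U z.1 x - U z.2 x‖ₑ ^ hpm.mk p x := fun z => by
          refine lintegral_congr_ae ?_
          filter_upwards [hpm.ae_eq_mk] with x hx
          rw [hx]
        simp_rw [hcongr]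
        rw [← lintegral_zero (μ := volume.restrict Ω)]
        refine tendsto_lintegral_filter_of_dominated_convergence (fun _ => A) ?_ ?_ ?_ ?_
        · refine Eventually.of_forall fun z => ?_
          exact ((hUc z.1).sub (hUc z.2)).enorm.measurable.pow hpm.measurable_mk
        · refine Eventually.of_forall fun z => ?_
          filter_upwards [ae_restrict_mem hΩ.measurableSet, hpm.ae_eq_mk] with x hx hpx
          have hxc : x ∈ closure Ω := subset_closure hx
          rw [← hpx]
          refine (ENNReal.rpow_le_rpow ((enorm_sub_le.trans
            (add_le_add (hUB _ x) (hUB _ x))).trans (le_max_right 1 _))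
              (by linarith [hp1 x hxc])).trans ?_
          exact ENNReal.rpow_le_rpow_of_exponent_le (le_max_left _ _) (hP x hxc)
        · rw [setLIntegral_const]
          exact ENNReal.mul_ne_top hAt hΩb.measure_lt_top.ne
        · filter_upwards [ae_restrict_mem hΩ.measurableSet, hpm.ae_eq_mk] with x hx hpx'
          have hxc : x ∈ closure Ω := subset_closure hx
          have hpx : 0 < p x := by linarith [hp1 x hxc]
          rw [← hpx']
          obtain ⟨l, hl⟩ := hconv (Φ x) (hΦ.comp (Continuous.prodMk_right x))
          have h1 := (hl.comp (tendsto_fst (f := atTop) (g := (atTop : Filter ℕ)))).sub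
            (hl.comp (tendsto_snd (f := (atTop : Filter ℕ)) (g := atTop)))
          rw [sub_self] at h1
          have h2 := ((ENNReal.continuous_rpow_const (y := p x)).tendsto _).comp
            ((continuous_enorm.tendsto _).comp h1)
          simpa [Function.comp_def, ENNReal.zero_rpow_of_pos hpx] using h2
      filter_upwards [ENNReal.tendsto_nhds_zero.1 hUlim η' (pos_iff_ne_zero.2 hη'0)] with z hz
      obtain ⟨Q₁, hQm₁, hQ₁, hQx₁⟩ := h _ _ (hu z.1)
      obtain ⟨Q₂, hQm₂, hQ₂, hQx₂⟩ := h _ _ (hu z.2)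
      have hm : MeasurableSet (Ω ∩ V) := (hΩ.inter hV).measurableSet
      calc ∫⁻ x in Ω ∩ V, ‖u z.1 x - u z.2 x‖ₑ ^ p x
          ≤ ∫⁻ x in Ω ∩ V, C * (Q₁ x + Q₂ x + ‖U z.1 x - U z.2 x‖ₑ ^ p x) := by
            refine lintegral_mono_ae ((ae_restrict_iff' hm).2 ?_)
            filter_upwards [hQx₁, hQx₂] with x hx₁ hx₂ hxV
            have hxc : x ∈ closure Ω := subset_closure hxV.1
            calc ‖u z.1 x - u z.2 x‖ₑ ^ p x
                ≤ (‖u z.1 x - U z.1 x‖ₑ + ‖u z.2 x - U z.2 x‖ₑ + ‖U z.1 x - U z.2 x‖ₑ) ^ p x := by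
                  refine ENNReal.rpow_le_rpow ?_ (by linarith [hp1 x hxc])
                  have e : u z.1 x - u z.2 x =
                    (u z.1 x - U z.1 x) - (u z.2 x - U z.2 x) + (U z.1 x - U z.2 x) := by abel
                  rw [e]
                  exact (enorm_add_le _ _).trans (add_le_add enorm_sub_le le_rfl)
              _ ≤ C * (‖u z.1 x - U z.1 x‖ₑ ^ p x + ‖u z.2 x - U z.2 x‖ₑ ^ p x +
                    ‖U z.1 x - U z.2 x‖ₑ ^ p x) := rpow_add_le_three (hp1 x hxc) (hP x hxc) _ _ _
              _ ≤ _ := by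
                  gcongr
                  · exact hx₁ hxV
                  · exact hx₂ hxV
        _ = C * ((∫⁻ x in Ω ∩ V, Q₁ x) + (∫⁻ x in Ω ∩ V, Q₂ x) +
              ∫⁻ x in Ω ∩ V, ‖U z.1 x - U z.2 x‖ₑ ^ p x) := by
            rw [lintegral_const_mul' _ _ hCt, lintegral_add_left (by fun_prop),
              lintegral_add_left hQm₁]
        _ ≤ C * (η' + η' + η') := by
            gcongr
            · exact (setLIntegral_le_lintegral _ _).trans hQ₁
            · exact (setLIntegral_le_lintegral _ _).trans hQ₂
            · exact (lintegral_mono_set inter_subset_left).trans hz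
        _ = C * 3 * η' := by ring
        _ = η := ENNReal.mul_div_cancel (by simp [hC0]) (ENNReal.mul_ne_top hCt (by simp))
  rwa [inter_eq_left.2 subset_closure] at key

/-! ### Compactness and completeness -/

lemma integrable_continuous_smul {N d : ℕ} {Ω : Set (Euc N)} (hΩ : MeasurableSet Ω)
    (hΩb : Bornology.IsBounded Ω) {f : Euc N → ℝ} (hf : Continuous f) {u : Euc N → Euc d}
    (hu : IntegrableOn u Ω) : Integrable (fun y => f y • u y) (volume.restrict Ω) := by
  obtain ⟨B, hB⟩ := hΩb.isCompact_closure.exists_bound_of_continuousOn hf.continuousOn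
  exact Integrable.bdd_smul hu B hf.aestronglyMeasurable
    ((ae_restrict_mem hΩ).mono fun y hy => hB y (subset_closure hy))

/-- A sequence bounded in `L¹(Ω)` has a subsequence converging against every continuous function
(weak-star compactness of measures, obtained from a countable dense set of test functions). -/
lemma exists_subseq_kernel {N d : ℕ} {Ω : Set (Euc N)} (hΩ : MeasurableSet Ω)
    (hΩb : Bornology.IsBounded Ω) {L : ℝ≥0∞} (hL : L ≠ ⊤) {u : ℕ → Euc N → Euc d}
    (hu : ∀ k, IntegrableOn (u k) Ω) (huL : ∀ k, ∫⁻ x in Ω, ‖u k x‖ₑ ≤ L) :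
    ∃ φ : ℕ → ℕ, StrictMono φ ∧ ∀ f : Euc N → ℝ, Continuous f →
      ∃ l, Tendsto (fun k => ∫ y in Ω, f y • u (φ k) y) atTop (𝓝 l) := by
  have hnorm : ∀ (f : Euc N → ℝ) (B : ℝ), 0 ≤ B → (∀ y ∈ Ω, |f y| ≤ B) → ∀ k,
      ‖∫ y in Ω, f y • u k y‖ ≤ B * L.toReal := by
    intro f B hB0 hB k
    have h := ENNReal.toReal_mono (ENNReal.mul_ne_top ENNReal.ofReal_ne_top hL)
      (enorm_kernel_integral_le hΩ hB (huL k))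
    rwa [toReal_enorm, ENNReal.toReal_mul, ENNReal.toReal_ofReal hB0] at h
  set g : ℕ → C(Euc N, ℝ) := TopologicalSpace.denseSeq C(Euc N, ℝ) with hg
  have hbd : ∀ n, ∃ B, 0 ≤ B ∧ ∀ y ∈ Ω, |g n y| ≤ B := by
    intro n
    obtain ⟨B, hB⟩ := hΩb.isCompact_closure.exists_bound_of_continuousOn
      (g n).continuous.continuousOn
    exact ⟨max B 0, le_max_right _ _, fun y hy => (hB y (subset_closure hy)).trans
      (le_max_left _ _)⟩
  choose B hB0 hB using hbd
  have hcpt : IsCompact (univ.pi fun n => Metric.closedBall (0 : Euc d) (B n * L.toReal)) :=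
    isCompact_univ_pi fun n => isCompact_closedBall _ _
  obtain ⟨l, -, φ, hφ, hlim⟩ := hcpt.tendsto_subseq (x := fun k n => ∫ y in Ω, g n y • u k y)
    (fun k n _ => by simpa using hnorm (g n) (B n) (hB0 n) (hB n) k)
  refine ⟨φ, hφ, fun f hf => cauchySeq_tendsto_of_complete ?_⟩
  rw [Metric.cauchySeq_iff]
  intro ε hε
  set δ := ε / (4 * (L.toReal + 1)) with hδ
  have hL0 : 0 ≤ L.toReal := ENNReal.toReal_nonneg
  have hδ0 : 0 < δ := by positivity
  have hδL : δ * L.toReal ≤ ε / 4 := by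
    rw [hδ, div_mul_eq_mul_div, div_le_iff₀ (by positivity)]
    nlinarith
  -- approximate `f` uniformly on the closure by a member of the dense sequence
  obtain ⟨n, hn⟩ : ∃ n, ∀ y ∈ closure Ω, dist (f y) (g n y) < δ := by
    have h := ContinuousMap.tendsto_iff_forall_isCompact_tendstoUniformlyOn.1
      (tendsto_id (x := 𝓝 (⟨f, hf⟩ : C(Euc N, ℝ)))) _ hΩb.isCompact_closure
    rw [Metric.tendstoUniformlyOn_iff] at h
    have h2 := h δ hδ0
    obtain ⟨g', hg', n, rfl⟩ :=
      mem_closure_iff_nhds.1 (TopologicalSpace.denseRange_denseSeq C(Euc N, ℝ) ⟨f, hf⟩) _ h2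
    exact ⟨n, hg'⟩
  have hclose : ∀ k, dist (∫ y in Ω, f y • u k y) (∫ y in Ω, g n y • u k y) ≤ ε / 4 := by
    intro k
    rw [dist_eq_norm, ← integral_sub (integrable_continuous_smul hΩ hΩb hf (hu k))
      (integrable_continuous_smul hΩ hΩb (g n).continuous (hu k))]
    simp_rw [← sub_smul]
    exact (hnorm (fun y => f y - g n y) δ hδ0.le
      (fun y hy => (hn y (subset_closure hy)).le) k).trans hδL
  have hgn := (tendsto_pi_nhds.1 hlim n).cauchySeq
  obtain ⟨k₀, hk₀⟩ := Metric.cauchySeq_iff.1 hgn (ε / 4) (by positivity)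
  refine ⟨k₀, fun m hm k hk => ?_⟩
  have h1 := hclose (φ m)
  have h2 := hclose (φ k)
  have h3 := hk₀ m hm k hk
  rw [dist_comm] at h2
  have h4 := dist_triangle4 (∫ y in Ω, f y • u (φ m) y) (∫ y in Ω, g n y • u (φ m) y)
    (∫ y in Ω, g n y • u (φ k) y) (∫ y in Ω, f y • u (φ k) y)
  simp only [Function.comp_apply] at h3
  linarith

/-- Away from small values a power with exponent at least one controls the identity. -/
lemma le_add_mul_rpow {lam : ℝ≥0∞} (h0 : lam ≠ 0) (h1 : lam ≤ 1) {q P : ℝ} (hq : 1 ≤ q)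
    (hqP : q ≤ P) (s : ℝ≥0∞) : s ≤ lam + lam ^ (1 - P) * s ^ q := by
  rcases le_total s lam with h | h
  · exact h.trans le_self_add
  refine le_trans ?_ le_add_self
  by_cases hs : s = ⊤
  · rw [hs, ENNReal.top_rpow_of_pos (by linarith), ENNReal.mul_top]
    exact (ENNReal.rpow_pos (pos_iff_ne_zero.2 h0) (h1.trans_lt ENNReal.one_lt_top).ne).ne'
  have hs0 : s ≠ 0 := (lt_of_lt_of_le (pos_iff_ne_zero.2 h0) h).ne'
  calc s = s ^ (1 - q) * s ^ q := by
        rw [← ENNReal.rpow_add _ _ hs0 hs]; simp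
    _ ≤ lam ^ (1 - q) * s ^ q := by
        refine mul_le_mul' ?_ le_rfl
        rw [← neg_sub q 1, ENNReal.rpow_neg, ENNReal.rpow_neg, ENNReal.inv_le_inv]
        exact ENNReal.rpow_le_rpow h (by linarith)
    _ ≤ lam ^ (1 - P) * s ^ q :=
        mul_le_mul' (ENNReal.rpow_le_rpow_of_exponent_ge h1 (by linarith)) le_rfl

/-- Completeness of the variable exponent space with respect to the modular. -/
lemma exists_modular_limit {N d : ℕ} {Ω : Set (Euc N)} (hΩ : MeasurableSet Ω)
    (hΩb : Bornology.IsBounded Ω) {p : Euc N → ℝ} {P : ℝ}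
    (hpm : AEMeasurable p (volume.restrict Ω)) (hp1 : ∀ x ∈ Ω, 1 ≤ p x) (hP : ∀ x ∈ Ω, p x ≤ P)
    {u : ℕ → Euc N → Euc d} (hu : ∀ k, Integrable (u k) (volume.restrict Ω))
    (hc : Tendsto (fun z : ℕ × ℕ => ∫⁻ x in Ω, ‖u z.1 x - u z.2 x‖ₑ ^ p x) (atTop ×ˢ atTop)
      (𝓝 0)) :
    ∃ u₀ : Euc N → Euc d,
      Tendsto (fun k => ∫⁻ x in Ω, ‖u k x - u₀ x‖ₑ ^ p x) atTop (𝓝 0) := by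
  rw [prod_atTop_atTop_eq] at hc
  have hc' : ∀ η : ℝ≥0∞, 0 < η → ∃ k₀, ∀ m ≥ k₀, ∀ n ≥ k₀,
      ∫⁻ x in Ω, ‖u m x - u n x‖ₑ ^ p x ≤ η := by
    intro η hη
    obtain ⟨⟨a, b⟩, hab⟩ := eventually_atTop.1 (ENNReal.tendsto_nhds_zero.1 hc η hη)
    exact ⟨max a b, fun m hm n hn =>
      hab (m, n) ⟨(le_max_left _ _).trans hm, (le_max_right _ _).trans hn⟩⟩
  have hμ : volume Ω ≠ ⊤ := hΩb.measure_lt_top.ne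
  -- modular Cauchy implies Cauchy in `L¹`, since `s ≤ lam + lam ^ (1 - P) * s ^ p x`
  have hcau : CauchySeq fun k => (hu k).toL1 (u k) := by
    refine uniformity_basis_edist_le.cauchySeq_iff.2 fun ε hε => ?_
    set lam : ℝ≥0∞ := min 1 (ε / 2 / (volume Ω + 1)) with hlam
    have hl1 : lam ≤ 1 := min_le_left _ _
    have hl0 : lam ≠ 0 := by
      refine (lt_min one_pos (ENNReal.div_pos ?_ (by simp [hμ]))).ne'
      exact (ENNReal.half_pos hε.ne').ne'
    have hlt : lam ≠ ⊤ := (hl1.trans_lt ENNReal.one_lt_top).ne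
    have hlμ : lam * volume Ω ≤ ε / 2 := by
      calc lam * volume Ω ≤ ε / 2 / (volume Ω + 1) * (volume Ω + 1) := by
            gcongr
            · exact min_le_right _ _
            · exact le_self_add
        _ ≤ ε / 2 := by
            rw [ENNReal.div_mul_cancel (by simp) (by simp [hμ])]
    have hCt : lam ^ (1 - P) ≠ ⊤ := ENNReal.rpow_ne_top_of_ne_zero hl0 hlt
    have hC0 : lam ^ (1 - P) ≠ 0 := (ENNReal.rpow_pos (pos_iff_ne_zero.2 hl0) hlt).ne'
    obtain ⟨k₀, hk₀⟩ := hc' (ε / 2 / lam ^ (1 - P))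
      (ENNReal.div_pos (ENNReal.half_pos hε.ne').ne' hCt)
    refine ⟨k₀, fun m hm n hn => ?_⟩
    change edist _ _ ≤ ε
    rw [Integrable.edist_toL1_toL1]
    calc ∫⁻ x in Ω, edist (u m x) (u n x)
        ≤ ∫⁻ x in Ω, (lam + lam ^ (1 - P) * ‖u m x - u n x‖ₑ ^ p x) := by
          refine setLIntegral_mono' hΩ fun x hx => ?_
          rw [edist_eq_enorm_sub]
          exact le_add_mul_rpow hl0 hl1 (hp1 x hx) (hP x hx) _
      _ = lam * volume Ω + lam ^ (1 - P) * ∫⁻ x in Ω, ‖u m x - u n x‖ₑ ^ p x := by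
          rw [lintegral_add_left measurable_const, setLIntegral_const,
            lintegral_const_mul' _ _ hCt]
      _ ≤ ε / 2 + lam ^ (1 - P) * (ε / 2 / lam ^ (1 - P)) := by
          gcongr
          exact hk₀ m hm n hn
      _ = ε := by rw [ENNReal.mul_div_cancel hC0 hCt, ENNReal.add_halves]
  obtain ⟨w, hw⟩ := cauchySeq_tendsto_of_complete hcau
  obtain ⟨ψ, hψ, hae⟩ := (tendstoInMeasure_of_tendsto_Lp hw).exists_seq_tendsto_ae
  -- the `L¹` limit `w` is also the modular limit, by Fatou along an a.e. convergent subsequence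
  refine ⟨w, ENNReal.tendsto_nhds_zero.2 fun η hη => ?_⟩
  obtain ⟨k₀, hk₀⟩ := hc' η hη
  filter_upwards [eventually_ge_atTop k₀] with k hk
  have hall : ∀ᵐ x ∂(volume.restrict Ω), ∀ i, (hu (ψ i)).toL1 (u (ψ i)) x = u (ψ i) x :=
    ae_all_iff.2 fun i => Integrable.coeFn_toL1 _
  calc ∫⁻ x in Ω, ‖u k x - w x‖ₑ ^ p x
      ≤ ∫⁻ x in Ω, liminf (fun i => ‖u k x - u (ψ i) x‖ₑ ^ p x) atTop := by
        refine lintegral_mono_ae ?_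
        filter_upwards [hae, hall] with x hx hx'
        simp_rw [hx'] at hx
        have h1 := ((ENNReal.continuous_rpow_const (y := p x)).tendsto _).comp
            ((continuous_enorm.tendsto _).comp (hx.const_sub (u k x)))
        exact h1.liminf_eq.ge
    _ ≤ liminf (fun i => ∫⁻ x in Ω, ‖u k x - u (ψ i) x‖ₑ ^ p x) atTop :=
        lintegral_liminf_le' fun i => ((hu k).1.sub (hu (ψ i)).1).enorm.pow hpm
    _ ≤ η := by
        refine liminf_le_of_frequently_le' (Eventually.frequently ?_)
        filter_upwards [eventually_ge_atTop k₀] with i hi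
        exact hk₀ k hk (ψ i) (hi.trans (hψ.id_le i))

/-! ### Modulars, scaling and the norms -/

lemma ofReal_norm_rpow {d : ℕ} (v : Euc d) {q : ℝ} (hq : 0 ≤ q) :
    ENNReal.ofReal (‖v‖ ^ q) = ‖v‖ₑ ^ q := by
  rw [← ofReal_norm, ENNReal.ofReal_rpow_of_nonneg (norm_nonneg v) hq]

lemma lintegral_ofReal_norm_rpow {N d : ℕ} {Ω : Set (Euc N)} (hΩ : MeasurableSet Ω)
    {p : Euc N → ℝ} (hp1 : ∀ x ∈ Ω, 1 ≤ p x) (u : Euc N → Euc d) :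
    ∫⁻ x in Ω, ENNReal.ofReal (‖u x‖ ^ p x) = ∫⁻ x in Ω, ‖u x‖ₑ ^ p x :=
  setLIntegral_congr_fun hΩ fun x hx => ofReal_norm_rpow _ (by linarith [hp1 x hx])

/-- On a set of finite measure the `L¹` norm is controlled by the modular. -/
lemma lintegral_enorm_le_modular {N d : ℕ} {Ω : Set (Euc N)} (hΩ : MeasurableSet Ω)
    {p : Euc N → ℝ} (hp1 : ∀ x ∈ Ω, 1 ≤ p x) (u : Euc N → Euc d) :
    ∫⁻ x in Ω, ‖u x‖ₑ ≤ volume Ω + emod Ω p (fun x => ‖u x‖) := by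
  rw [emod, lintegral_ofReal_norm_rpow hΩ hp1]
  calc ∫⁻ x in Ω, ‖u x‖ₑ ≤ ∫⁻ x in Ω, (1 + ‖u x‖ₑ ^ p x) := by
        refine setLIntegral_mono' hΩ fun x hx => ?_
        simpa using le_add_mul_rpow one_ne_zero le_rfl (hp1 x hx) le_rfl ‖u x‖ₑ
    _ = volume Ω + ∫⁻ x in Ω, ‖u x‖ₑ ^ p x := by
        rw [lintegral_add_left measurable_const, setLIntegral_const, one_mul]

lemma IsWeakGrad.const_smul {N d : ℕ} {Ω : Set (Euc N)} {u : Euc N → Euc d}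
    {G : Euc N → Mat d N} (h : IsWeakGrad Ω u G) (c : ℝ) :
    IsWeakGrad Ω (fun x => c • u x) (fun x i j => c * G x i j) := by
  intro φ hφ hc hs i j
  have h1 := h φ hφ hc hs i j
  simp only [PiLp.smul_apply, smul_eq_mul, mul_left_comm _ c, integral_const_mul, h1, mul_neg]

lemma mnorm_const_mul {d n : ℕ} {c : ℝ} (hc : 0 ≤ c) (ξ : Mat d n) :
    mnorm (fun i j => c * ξ i j) = c * mnorm ξ := by
  simp only [mnorm, mul_pow, ← Finset.mul_sum]
  rw [Real.sqrt_mul (sq_nonneg c), Real.sqrt_sq hc]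

lemma emod_mono {N : ℕ} {Ω : Set (Euc N)} (hΩ : MeasurableSet Ω) {p : Euc N → ℝ}
    (hp1 : ∀ x ∈ Ω, 1 ≤ p x) {f g : Euc N → ℝ} (hf : ∀ x, 0 ≤ f x) (hfg : ∀ x, f x ≤ g x) :
    emod Ω p f ≤ emod Ω p g :=
  setLIntegral_mono' hΩ fun x hx =>
    ENNReal.ofReal_le_ofReal (Real.rpow_le_rpow (hf x) (hfg x) (by linarith [hp1 x hx]))

/-- Since the exponent is at least one, dividing by `c ≥ 1` divides the modular by at least `c`. -/
lemma emod_div_le {N : ℕ} {Ω : Set (Euc N)} (hΩ : MeasurableSet Ω) {p : Euc N → ℝ}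
    (hp1 : ∀ x ∈ Ω, 1 ≤ p x) {f : Euc N → ℝ} (hf : ∀ x, 0 ≤ f x) {c : ℝ} (hc : 1 ≤ c) :
    emod Ω p (fun x => f x / c) ≤ ENNReal.ofReal c⁻¹ * emod Ω p f := by
  have hc0 : 0 < c := by linarith
  rw [emod, emod, ← lintegral_const_mul' _ _ ENNReal.ofReal_ne_top]
  refine setLIntegral_mono' hΩ fun x hx => ?_
  rw [← ENNReal.ofReal_mul (inv_nonneg.2 hc0.le)]
  refine ENNReal.ofReal_le_ofReal ?_
  rw [Real.div_rpow (hf x) hc0.le, div_eq_inv_mul]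
  have h1 : c ≤ c ^ p x := by
    simpa using Real.rpow_le_rpow_of_exponent_le hc (hp1 x hx)
  exact mul_le_mul_of_nonneg_right (inv_anti₀ hc0 h1) (Real.rpow_nonneg (hf x) _)

/-- A bound `c` on the modular of `(u / τ, G / τ)` makes `c * τ` admissible in the definition of
the Sobolev norm. -/
lemma sobNorm_admissible {N d : ℕ} {Ω : Set (Euc N)} (hΩ : MeasurableSet Ω) {p : Euc N → ℝ}
    (hpm : AEMeasurable p (volume.restrict Ω)) (hp1 : ∀ x ∈ Ω, 1 ≤ p x) {u : Euc N → Euc d}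
    {G : Euc N → Mat d N} (hu : AEStronglyMeasurable u (volume.restrict Ω)) {c τ : ℝ}
    (hc : 1 ≤ c) (hτ : 0 < τ)
    (h : emod Ω p (fun x => ‖u x‖ / τ) + emod Ω p (fun x => mnorm (G x) / τ) ≤
      ENNReal.ofReal c) :
    0 < c * τ ∧ ∫⁻ x in Ω, (ENNReal.ofReal ((‖u x‖ / (c * τ)) ^ p x)
      + ENNReal.ofReal ((mnorm (G x) / (c * τ)) ^ p x)) ≤ 1 := by
  have hc0 : 0 < c := by linarith
  refine ⟨by positivity, ?_⟩
  rw [lintegral_add_left' (by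
    exact ((hu.norm.aemeasurable.div_const _).pow hpm).ennreal_ofReal)]
  have h1 := emod_div_le hΩ hp1 (f := fun x => ‖u x‖ / τ) (fun x => by positivity) hc
  have h2 := emod_div_le hΩ hp1 (f := fun x => mnorm (G x) / τ)
    (fun x => div_nonneg (mnorm_nonneg _) hτ.le) hc
  simp only [div_div, mul_comm τ c] at h1 h2
  calc _ ≤ _ := add_le_add h1 h2
    _ = ENNReal.ofReal c⁻¹ * (emod Ω p (fun x => ‖u x‖ / τ) +
        emod Ω p (fun x => mnorm (G x) / τ)) := by rw [mul_add]
    _ ≤ ENNReal.ofReal c⁻¹ * ENNReal.ofReal c := by gcongr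
    _ = 1 := by
        rw [← ENNReal.ofReal_mul (inv_nonneg.2 hc0.le), inv_mul_cancel₀ hc0.ne', ENNReal.ofReal_one]

lemma integral_norm_le_of_lintegral {N d : ℕ} {Ω : Set (Euc N)} {u : Euc N → Euc d}
    (hu : AEStronglyMeasurable u (volume.restrict Ω)) {L : ℝ≥0∞} (hL : L ≠ ⊤)
    (h : ∫⁻ x in Ω, ‖u x‖ₑ ≤ L) : ∫ x in Ω, ‖u x‖ ≤ L.toReal := by
  rw [integral_norm_eq_lintegral_enorm hu]
  exact ENNReal.toReal_mono hL h

/-- Every number above the Luxemburg norm is admissible in its definition. -/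
lemma emod_div_le_one_of_luxNorm_lt {N : ℕ} {Ω : Set (Euc N)} (hΩ : MeasurableSet Ω)
    {p : Euc N → ℝ} (hp1 : ∀ x ∈ Ω, 1 ≤ p x) {f : Euc N → ℝ} (hf : ∀ x, 0 ≤ f x)
    (hne : {lam : ℝ | 0 < lam ∧ emod Ω p (fun x => f x / lam) ≤ 1}.Nonempty) {τ : ℝ}
    (hτ : luxNorm Ω p f < τ) : emod Ω p (fun x => f x / τ) ≤ 1 := by
  obtain ⟨lam, ⟨hl0, hl⟩, hlt⟩ := exists_lt_of_csInf_lt hne hτ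
  exact (emod_mono hΩ hp1 (fun x => div_nonneg (hf x) (hl0.trans hlt).le)
    fun x => div_le_div_of_nonneg_left (hf x) hl0 hlt.le).trans hl

lemma luxNorm_nonneg {N : ℕ} (Ω : Set (Euc N)) (p f : Euc N → ℝ) : 0 ≤ luxNorm Ω p f :=
  Real.sInf_nonneg fun _ h => h.1.le

lemma enorm_inv_smul_le {N d : ℕ} {Ω : Set (Euc N)} {u : Euc N → Euc d} {τ : ℝ} (hτ : 0 < τ)
    (hu : IntegrableOn u Ω) (h : ∫ x in Ω, ‖u x‖ ≤ τ) : ∫⁻ x in Ω, ‖τ⁻¹ • u x‖ₑ ≤ 1 := by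
  simp_rw [enorm_smul]
  rw [lintegral_const_mul' _ _ enorm_ne_top, Real.enorm_eq_ofReal (inv_nonneg.2 hτ.le)]
  have h1 : ∫⁻ x in Ω, ‖u x‖ₑ ≤ ENNReal.ofReal τ := by
    rw [← ofReal_integral_norm_eq_lintegral_enorm hu]
    exact ENNReal.ofReal_le_ofReal h
  calc _ ≤ ENNReal.ofReal τ⁻¹ * ENNReal.ofReal τ := by gcongr
    _ = 1 := by
        rw [← ENNReal.ofReal_mul (inv_nonneg.2 hτ.le), inv_mul_cancel₀ hτ.ne', ENNReal.ofReal_one]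

/-! ### Identification, compactness and equivalence of norms -/

/-- Proposition `embp0x`: identification of
`{u ∈ L¹ : ∇u ∈ L^{p(·)}}` with `W^{1,p(·)}`, compactness of the embedding
`W^{1,p(·)} ↪ L^{p(·)}`, and equivalence of the norm `‖u‖_{L¹} + ‖∇u‖_{L^{p(·)}}`
with the `W^{1,p(·)}`-norm, for `p` continuous on `Ω̄` with `p ≥ 1`. -/
theorem statement5 {N d : ℕ} (Ω : Set (Euc N)) (hΩ : IsOpen Ω)
    (hΩb : Bornology.IsBounded Ω) (hΩL : HasLipschitzBoundary Ω)
    (p : Euc N → ℝ) (hp : ContinuousOn p (closure Ω)) (hp1 : ∀ x ∈ closure Ω, 1 ≤ p x) :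
    -- (i)  {u ∈ L¹(Ω;ℝ^d) : ∇u ∈ L^{p(·)}(Ω;ℝ^{d×N})} = W^{1,p(·)}(Ω;ℝ^d)
    ({u : Euc N → Euc d | IntegrableOn u Ω ∧ ∃ G : Euc N → Mat d N,
        (∀ i j, AEMeasurable (fun x => G x i j) (volume.restrict Ω)) ∧
        IsWeakGrad Ω u G ∧ emod Ω p (fun x => mnorm (G x)) < ⊤} =
      {u : Euc N → Euc d | ∃ G : Euc N → Mat d N, MemW1pVar Ω p u G}) ∧
    -- (ii) compactness of the embedding W^{1,p(·)} ↪ L^{p(·)}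
    (∀ (u : ℕ → Euc N → Euc d) (G : ℕ → Euc N → Mat d N) (C : ℝ≥0∞), C < ⊤ →
      (∀ k, MemW1pVar Ω p (u k) (G k) ∧
        emod Ω p (fun x => ‖u k x‖) + emod Ω p (fun x => mnorm (G k x)) ≤ C) →
      ∃ (u₀ : Euc N → Euc d) (φ : ℕ → ℕ), StrictMono φ ∧
        TendstoModular Ω p (fun k => u (φ k)) u₀) ∧
    -- (iii) equivalence of the norms |||·||| and ‖·‖_{W^{1,p(·)}}
    (∃ c₁ c₂ : ℝ, 0 < c₁ ∧ 0 < c₂ ∧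
      ∀ (u : Euc N → Euc d) (G : Euc N → Mat d N), MemW1pVar Ω p u G →
        c₁ * sobNorm Ω p u G ≤ (∫ x in Ω, ‖u x‖) + luxNorm Ω p (fun x => mnorm (G x)) ∧
        (∫ x in Ω, ‖u x‖) + luxNorm Ω p (fun x => mnorm (G x)) ≤ c₂ * sobNorm Ω p u G) := by
  have hΩm := hΩ.measurableSet
  have hcpt : IsCompact (closure Ω) := hΩb.isCompact_closure
  obtain ⟨P, hP'⟩ := hcpt.exists_bound_of_continuousOn hp
  have hP : ∀ x ∈ closure Ω, p x ≤ P := fun x hx => (le_abs_self _).trans (hP' x hx)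
  have hloc : ∀ x₀ ∈ closure Ω, ∃ V, IsOpen V ∧ x₀ ∈ V ∧ HasKernelApprox d Ω p V :=
    fun x₀ hx₀ => exists_hasKernelApprox d hΩ hΩb hΩL hp hp1 hP hx₀
  have hpm : AEMeasurable p (volume.restrict Ω) := (hp.mono subset_closure).aemeasurable hΩm
  have hp1Ω : ∀ x ∈ Ω, 1 ≤ p x := fun x hx => hp1 x (subset_closure hx)
  have hPΩ : ∀ x ∈ Ω, p x ≤ P := fun x hx => hP x (subset_closure hx)
  have hvol : volume Ω ≠ ⊤ := hΩb.measure_lt_top.ne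
  have hint : ∀ (u : Euc N → Euc d) (G : Euc N → Mat d N), MemW1pVar Ω p u G →
      IntegrableOn u Ω := fun u G h => ⟨h.1, (lintegral_enorm_le_modular hΩm hp1Ω u).trans_lt
        (ENNReal.add_lt_top.2 ⟨hvol.lt_top, h.2.2.2.1⟩)⟩
  refine ⟨?_, ?_, ?_⟩
  · ext u
    constructor
    · rintro ⟨hu, G, hGm, hw, hG⟩
      refine ⟨G, hu.1, hGm, hw, ?_, hG⟩
      obtain ⟨K, hK, h⟩ := exists_modular_bound hΩ hΩb hp1 hP hloc hG.ne hu.2.ne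
      rw [emod, lintegral_ofReal_norm_rpow hΩm hp1Ω]
      exact (h u G ⟨hu, hGm, hw, le_rfl⟩ le_rfl).trans_lt hK.lt_top
    · rintro ⟨G, h⟩
      exact ⟨hint u G h, G, h.2.1, h.2.2.1, h.2.2.2.2⟩
  · intro u G C hC h
    have hL : volume Ω + C ≠ ⊤ := ENNReal.add_ne_top.2 ⟨hvol, hC.ne⟩
    have hui : ∀ k, IntegrableOn (u k) Ω := fun k => hint _ _ (h k).1
    have huL : ∀ k, ∫⁻ x in Ω, ‖u k x‖ₑ ≤ volume Ω + C := fun k =>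
      (lintegral_enorm_le_modular hΩm hp1Ω (u k)).trans
        (by gcongr; exact le_self_add.trans (h k).2)
    have hbd : ∀ k, GradBdd Ω p C (u k) (G k) := fun k =>
      ⟨hui k, (h k).1.2.1, (h k).1.2.2.1, le_add_self.trans (h k).2⟩
    obtain ⟨φ, hφ, hconv⟩ := exists_subseq_kernel hΩm hΩb hL hui huL
    have hcau := tendsto_modular_cauchy (u := fun k => u (φ k)) (G := fun k => G (φ k)) hΩ hΩb
      hp hp1 hP hloc hC.ne hL (fun k => hbd (φ k)) (fun k => huL (φ k)) hconv
    obtain ⟨u₀, hu₀⟩ := exists_modular_limit (u := fun k => u (φ k)) hΩm hΩb hpm hp1Ω hPΩ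
      (fun k => hui (φ k)) hcau
    refine ⟨u₀, φ, hφ, ?_⟩
    unfold TendstoModular
    simp_rw [lintegral_ofReal_norm_rpow hΩm hp1Ω]
    exact hu₀
  · obtain ⟨K, hK, hKb⟩ := exists_modular_bound (d := d) hΩ hΩb hp1 hP hloc ENNReal.one_ne_top
      ENNReal.one_ne_top
    have hK1 : 0 < K.toReal + 1 := by positivity
    have hv0 : 0 ≤ (volume Ω).toReal := ENNReal.toReal_nonneg
    -- `K` bounds the modular of `u` on the unit ball of the norm `|||·|||`, so `K + 1` bounds the sum
    -- of the two modulars; conversely the `L¹` norm is at most `volume Ω` plus the modular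
    refine ⟨(K.toReal + 1)⁻¹, (volume Ω).toReal + 2, by positivity, by positivity,
      fun u G hu => ?_⟩
    have hui := hint u G hu
    -- every `lam` admissible for the Sobolev norm is admissible for the norm of the gradient,
    -- and the modular of `u / lam` is then at most one
    have hadm : ∀ lam : ℝ, 0 < lam → ∫⁻ x in Ω, (ENNReal.ofReal ((‖u x‖ / lam) ^ p x)
        + ENNReal.ofReal ((mnorm (G x) / lam) ^ p x)) ≤ 1 →
        emod Ω p (fun x => ‖u x‖ / lam) ≤ 1 ∧ emod Ω p (fun x => mnorm (G x) / lam) ≤ 1 :=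
      fun lam _ h => ⟨(lintegral_mono fun _ => le_self_add).trans h,
        (lintegral_mono fun _ => le_add_self).trans h⟩
    obtain ⟨lam₀, hl₀, hlam₀⟩ : ∃ lam : ℝ, 0 < lam ∧
        ∫⁻ x in Ω, (ENNReal.ofReal ((‖u x‖ / lam) ^ p x)
          + ENNReal.ofReal ((mnorm (G x) / lam) ^ p x)) ≤ 1 := by
      have hne : emod Ω p (fun x => ‖u x‖) + emod Ω p (fun x => mnorm (G x)) ≠ ⊤ :=
        ENNReal.add_ne_top.2 ⟨hu.2.2.2.1.ne, hu.2.2.2.2.ne⟩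
      refine ⟨_, sobNorm_admissible hΩm hpm hp1Ω hu.1 (G := G) (le_max_left 1
        (emod Ω p (fun x => ‖u x‖) + emod Ω p (fun x => mnorm (G x))).toReal) one_pos ?_⟩
      simp only [div_one]
      exact (ENNReal.ofReal_toReal hne).ge.trans (ENNReal.ofReal_le_ofReal (le_max_right _ _))
    constructor
    · rw [inv_mul_le_iff₀ hK1]
      set T := (∫ x in Ω, ‖u x‖) + luxNorm Ω p (fun x => mnorm (G x)) with hT
      have hI0 : 0 ≤ ∫ x in Ω, ‖u x‖ := integral_nonneg fun _ => norm_nonneg _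
      have hl0 := luxNorm_nonneg Ω p (fun x => mnorm (G x))
      rw [← div_le_iff₀' hK1]
      -- `(u / τ, G / τ)` lies in the unit ball of `|||·|||` for every `τ` above the right-hand side
      refine le_of_forall_gt_imp_ge_of_dense fun τ hτ => ?_
      rw [div_le_iff₀' hK1]
      have hτ0 : 0 < τ := by linarith
      have hGτ : emod Ω p (fun x => mnorm (G x) / τ) ≤ 1 :=
        emod_div_le_one_of_luxNorm_lt hΩm hp1Ω (fun _ => mnorm_nonneg _)
          ⟨lam₀, hl₀, (hadm lam₀ hl₀ hlam₀).2⟩ (by linarith)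
      have hn : ∀ x, ‖τ⁻¹ • u x‖ = ‖u x‖ / τ := fun x => by
        rw [norm_smul, Real.norm_of_nonneg (inv_nonneg.2 hτ0.le), inv_mul_eq_div]
      have hmn : ∀ x, mnorm (fun i j => τ⁻¹ * G x i j) = mnorm (G x) / τ := fun x => by
        rw [mnorm_const_mul (inv_nonneg.2 hτ0.le), inv_mul_eq_div]
      have huτ : emod Ω p (fun x => ‖u x‖ / τ) ≤ K := by
        have h := hKb (fun x => τ⁻¹ • u x) (fun x i j => τ⁻¹ * G x i j)
          ⟨hui.smul τ⁻¹, fun i j => (hu.2.1 i j).const_mul _, hu.2.2.1.const_smul _,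
            by simpa only [hmn] using hGτ⟩ (enorm_inv_smul_le hτ0 hui (by linarith))
        rw [← lintegral_ofReal_norm_rpow hΩm hp1Ω] at h
        simpa only [emod, hn] using h
      refine csInf_le ⟨0, fun _ h => h.1.le⟩
        (sobNorm_admissible hΩm hpm hp1Ω hu.1 (by simp) hτ0 ?_)
      rw [ENNReal.ofReal_add ENNReal.toReal_nonneg zero_le_one, ENNReal.ofReal_toReal hK,
        ENNReal.ofReal_one]
      exact add_le_add huτ hGτ
    · have hc : 0 < (volume Ω).toReal + 2 := by positivity
      rw [← div_le_iff₀' hc]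
      refine le_csInf ⟨lam₀, hl₀, hlam₀⟩ ?_
      rintro lam ⟨hl, h⟩
      obtain ⟨h1, h2⟩ := hadm lam hl h
      rw [div_le_iff₀' hc]
      have hlux : luxNorm Ω p (fun x => mnorm (G x)) ≤ lam :=
        csInf_le ⟨0, fun _ h => h.1.le⟩ ⟨hl, h2⟩
      have hn : ∀ x, ‖lam⁻¹ • u x‖ = ‖u x‖ / lam := fun x => by
        rw [norm_smul, Real.norm_of_nonneg (inv_nonneg.2 hl.le), inv_mul_eq_div]
      have h3 : ∫ x in Ω, ‖lam⁻¹ • u x‖ ≤ (volume Ω + 1).toReal := by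
        refine integral_norm_le_of_lintegral (hu.1.const_smul lam⁻¹) (by simp [hvol])
          ((lintegral_enorm_le_modular hΩm hp1Ω fun x => lam⁻¹ • u x).trans ?_)
        simp only [hn]
        gcongr
      simp only [hn, integral_div] at h3
      rw [ENNReal.toReal_add hvol ENNReal.one_ne_top, ENNReal.toReal_one, div_le_iff₀ hl] at h3
      linarith
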